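/- arXiv:2307.13826 — 2 statements merged into one kernel-verified Lean document; each statement's English description precedes it below -/
import Mathlib

section
/- For any f^{(k+1)}: P_{k+1} → ℝ with projection f^{(k)} = P^↑_k f^{(k+1)}, the Dirichlet forms satisfy E_{P_{k+1}^∇}(f^{(k+1)}) ≥ (2γ_{k-1} − 1)·E_{P_k^∇}(f^{(k)}). -/
open Finset
open scoped Classical

variable {E : Type*} [Fintype E] [DecidableEq E]

/-- `μ` is a probability distribution on the size-`n` faces (top level) of a pure
weighted simplicial complex with ground set `E`. -/
def IsDistOn (μ : Finset E → ℝ) (n : ℕ) : Prop :=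
  (∀ S, 0 ≤ μ S) ∧ (∀ S, S.card ≠ n → μ S = 0) ∧ (∑ S, μ S = 1)

/-- The induced distribution `π_k` on level `k`:
`π_k(S) = C(n,k)⁻¹ · Σ_{T ⊇ S} μ(T)` for `|S| = k`, and `0` otherwise. -/
noncomputable def piLev (μ : Finset E → ℝ) (n k : ℕ) (S : Finset E) : ℝ :=
  if S.card = k then (n.choose k : ℝ)⁻¹ * ∑ T ∈ univ.filter (fun T => S ⊆ T), μ T else 0

/-- The stationary distribution `π_{S,1}` of the local walk at the face `S`:
the one-element conditional distribution above `S`. -/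
noncomputable def piLoc (μ : Finset E → ℝ) (n : ℕ) (S : Finset E) (a : E) : ℝ :=
  piLev μ n (S.card + 1) (insert a S) / ((S.card + 1) * piLev μ n S.card S)

/-- The local walk `Q_S` at a face `S`:
`Q_S(a,b) = π_{i+2}(S∪a∪b) / ((i+2)·π_{i+1}(S∪a))` (0 when `a = b`). -/
noncomputable def localQ (μ : Finset E → ℝ) (n : ℕ) (S : Finset E) : Matrix E E ℝ :=
  Matrix.of fun a b =>
    piLev μ n (S.card + 2) (insert b (insert a S)) /
      ((S.card + 2) * piLev μ n (S.card + 1) (insert a S))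

/-- The down operator `P↓_k` from level `k` to level `k−1`. -/
noncomputable def Pdown (k : ℕ) : Matrix (Finset E) (Finset E) ℝ :=
  Matrix.of fun S T => if T ⊆ S ∧ S.card = k ∧ T.card = k - 1 then (k : ℝ)⁻¹ else 0

/-- The up operator `P↑_k` from level `k` to level `k+1`. -/
noncomputable def Pup (μ : Finset E → ℝ) (n k : ℕ) : Matrix (Finset E) (Finset E) ℝ :=
  Matrix.of fun S T => if S ⊆ T ∧ S.card = k ∧ T.card = k + 1 then
    piLev μ n (k + 1) T / (((k : ℝ) + 1) * piLev μ n k S) else 0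

/-- The multi-level down operator from level `i` to level `j ≤ i`
(remove `i−j` uniformly random elements). -/
noncomputable def PdownM (i j : ℕ) : Matrix (Finset E) (Finset E) ℝ :=
  Matrix.of fun S T => if T ⊆ S ∧ S.card = i ∧ T.card = j then (i.choose j : ℝ)⁻¹ else 0

/-- The multi-level up operator from level `j` to level `i ≥ j`
(add `i−j` elements according to the conditional distribution). -/
noncomputable def PupM (μ : Finset E → ℝ) (n j i : ℕ) : Matrix (Finset E) (Finset E) ℝ :=
  Matrix.of fun S T => if S ⊆ T ∧ S.card = j ∧ T.card = i then
    piLev μ n i T / ((i.choose j : ℝ) * piLev μ n j S) else 0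

/-- Dirichlet form `E_P(f) = (1/2)·Σ_{a,b} π(a)P(a,b)(f(a)−f(b))²`. -/
noncomputable def dirichletForm {ι : Type*} [Fintype ι] (π : ι → ℝ)
    (P : Matrix ι ι ℝ) (f : ι → ℝ) : ℝ :=
  (1 / 2) * ∑ a, ∑ b, π a * P a b * (f a - f b) ^ 2

/-- Variance `Var_π(f)` with respect to a weight `π` summing to 1. -/
noncomputable def varw {ι : Type*} [Fintype ι] (π : ι → ℝ) (f : ι → ℝ) : ℝ :=
  ∑ a, π a * (f a - ∑ b, π b * f b) ^ 2

/-!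
By detailed balance, a down-up Dirichlet form is an average of conditional variances:
`E_{P_{k+1}^∇}(f) = ∑_S π_k(S) · Var_{P↑_k(S,·)}(f)`. Conditioning further on a face `η ⊆ S` of size
`k - 1` localises the two forms to the link of `η`. Write `p = π_{η,1}` and `Q = Q_η`, and put
`F(a, b) = f(η ∪ {a, b})`, which is symmetric, and `g(a) = f^{(k)}(η ∪ {a})`, which is the mean of
`F(a, ·)` under `Q(a, ·)`. The two local contributions are then `∑_a p(a) · Var_{Q(a,·)}(F(a, ·))`
and `Var_p(g)`. For a random step `a → b` of the local walk, and with `m` the `p`-mean of `g`,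
expanding `0 ≤ 𝔼[((F(a, b) - g(a)) - (g(b) - m))²]` gives
`∑_a p(a) · Var_{Q(a,·)}(F(a, ·)) ≥ 2 E_Q(g) - Var_p(g)`: the cross term is `E_Q(g)` because `F` is
symmetric and the walk is reversible. The local spectral gap bounds `E_Q(g)` from below by
`γ · Var_p(g)`.
-/

section FiniteChains

variable {ι κ : Type*} [Fintype ι] [Fintype κ]

lemma dirichletForm_const_row_eq_varw {p : ι → ℝ} (hp : ∑ a, p a = 1) (f : ι → ℝ) :
    dirichletForm p (Matrix.of fun _ => p) f = varw p f := by
  set d : ι → ℝ := fun a => f a - ∑ b, p b * f b with hd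
  have hd_mean : ∑ a, p a * d a = 0 := by
    simp only [hd, mul_sub, sum_sub_distrib, ← sum_mul, hp, one_mul, sub_self]
  have hexpand (a b : ι) : p a * p b * (f a - f b) ^ 2 =
      p a * d a ^ 2 * p b + p a * (p b * d b ^ 2) - 2 * (p a * d a * (p b * d b)) := by
    simp only [hd]; ring
  simp only [dirichletForm, Matrix.of_apply, hexpand, sum_sub_distrib, sum_add_distrib, ← mul_sum,
    ← sum_mul, hp, hd_mean]
  simp only [varw, hd]
  ring

lemma dirichletForm_mul_eq_sum_varw {π : ι → ℝ} {ρ : κ → ℝ} {D : Matrix ι κ ℝ} {U : Matrix κ ι ℝ}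
    (hbal : ∀ a s, π a * D a s = ρ s * U s a) (hU : ∀ s, ρ s ≠ 0 → ∑ a, U s a = 1) (f : ι → ℝ) :
    dirichletForm π (D * U) f = ∑ s, ρ s * varw (U s) f := by
  have hrow (s : κ) : ρ s * varw (U s) f =
      1 / 2 * ∑ a, ∑ b, π a * D a s * U s b * (f a - f b) ^ 2 := by
    by_cases hs : ρ s = 0
    · simp [hbal, hs]
    · simp only [← dirichletForm_const_row_eq_varw (hU s hs), dirichletForm, Matrix.of_apply, hbal,
        mul_left_comm (ρ s), mul_assoc, mul_sum]
  calc dirichletForm π (D * U) f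
      = 1 / 2 * ∑ a, ∑ b, ∑ s, π a * D a s * U s b * (f a - f b) ^ 2 := by
        simp only [dirichletForm, Matrix.mul_apply, mul_sum, sum_mul, mul_assoc]
    _ = 1 / 2 * ∑ s, ∑ a, ∑ b, π a * D a s * U s b * (f a - f b) ^ 2 := by
        congr 1
        exact (sum_comm.trans (sum_congr rfl fun a _ => sum_comm)).symm
    _ = ∑ s, ρ s * varw (U s) f := by
        simp only [hrow, mul_sum]

variable {p : ι → ℝ} {Q : Matrix ι ι ℝ} {F : ι → ι → ℝ} {g : ι → ℝ}

lemma sum_sum_mul_eq_of_reversible (hrev : ∀ a b, p a * Q a b = p b * Q b a)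
    (hrow : ∀ a, p a ≠ 0 → ∑ b, Q a b = 1) (G : ι → ℝ) :
    ∑ a, ∑ b, p a * Q a b * G b = ∑ b, p b * G b := by
  rw [sum_comm]
  refine sum_congr rfl fun b _ => ?_
  by_cases hb : p b = 0
  · simp [hrev _ b, hb]
  · simp only [hrev _ b, ← sum_mul, ← mul_sum, hrow b hb, mul_one]

lemma sum_sum_deviation_mul_eq_dirichletForm (hrev : ∀ a b, p a * Q a b = p b * Q b a)
    (hrow : ∀ a, p a ≠ 0 → ∑ b, Q a b = 1) (hF : ∀ a b, F a b = F b a)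
    (hg : ∀ a, p a ≠ 0 → g a = ∑ b, Q a b * F a b) (c : ℝ) :
    ∑ a, ∑ b, p a * Q a b * ((F a b - g a) * (g b - c)) = dirichletForm p Q g := by
  have hdev (a : ι) : ∑ b, p a * Q a b * (F a b - g a) = 0 := by
    by_cases ha : p a = 0
    · simp [ha]
    · simp only [mul_assoc, ← mul_sum, mul_sub, sum_sub_distrib, ← sum_mul, hrow a ha, ← hg a ha,
        one_mul, sub_self]
  set X := ∑ a, ∑ b, p a * Q a b * ((F a b - g a) * (g b - g a)) with hX
  have hrecenter : ∑ a, ∑ b, p a * Q a b * ((F a b - g a) * (g b - c)) = X := by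
    rw [← sub_eq_zero, hX]
    simp only [← sum_sub_distrib]
    refine sum_eq_zero fun a _ => ?_
    rw [← mul_zero (g a - c), ← hdev a, mul_sum]
    exact sum_congr rfl fun b _ => by ring
  have hswap : X = ∑ a, ∑ b, p a * Q a b * ((F a b - g b) * (g a - g b)) := by
    rw [hX, sum_comm]
    exact sum_congr rfl fun a _ => sum_congr rfl fun b _ => by rw [hrev, hF]
  have hsymmetrize : X + X = ∑ a, ∑ b, p a * Q a b * (g a - g b) ^ 2 := by
    nth_rw 2 [hswap]
    simp only [hX, ← sum_add_distrib]
    exact sum_congr rfl fun a _ => sum_congr rfl fun b _ => by ring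
  rw [hrecenter, dirichletForm, ← hsymmetrize]
  ring

lemma two_mul_dirichletForm_sub_varw_le (hp : ∀ a, 0 ≤ p a) (hQ : ∀ a b, 0 ≤ Q a b)
    (hrev : ∀ a b, p a * Q a b = p b * Q b a) (hrow : ∀ a, p a ≠ 0 → ∑ b, Q a b = 1)
    (hF : ∀ a b, F a b = F b a) (hg : ∀ a, p a ≠ 0 → g a = ∑ b, Q a b * F a b) :
    2 * dirichletForm p Q g - varw p g ≤ ∑ a, p a * varw (Q a) (F a) := by
  set m := ∑ b, p b * g b
  have hsq : 0 ≤ ∑ a, ∑ b, p a * Q a b * ((F a b - g a) - (g b - m)) ^ 2 :=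
    sum_nonneg fun a _ => sum_nonneg fun b _ =>
      mul_nonneg (mul_nonneg (hp a) (hQ a b)) (sq_nonneg _)
  have hfst : ∑ a, ∑ b, p a * Q a b * (F a b - g a) ^ 2 = ∑ a, p a * varw (Q a) (F a) := by
    refine sum_congr rfl fun a _ => ?_
    by_cases ha : p a = 0
    · simp [ha]
    · simp only [varw, hg a ha, mul_sum, mul_assoc]
  have hcross := sum_sum_deviation_mul_eq_dirichletForm hrev hrow hF hg m
  have hsnd : ∑ a, ∑ b, p a * Q a b * (g b - m) ^ 2 = varw p g :=
    sum_sum_mul_eq_of_reversible hrev hrow _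
  have hexpand (a b : ι) : p a * Q a b * ((F a b - g a) - (g b - m)) ^ 2 =
      p a * Q a b * (F a b - g a) ^ 2 - 2 * (p a * Q a b * ((F a b - g a) * (g b - m))) +
        p a * Q a b * (g b - m) ^ 2 := by
    ring
  simp only [hexpand, sum_add_distrib, sum_sub_distrib, ← mul_sum] at hsq
  linarith

end FiniteChains

section Supersets

variable {M : Type*} [AddCommMonoid M]

lemma sum_superset_card_succ (S : Finset E) (X : Finset E → M) :
    ∑ T with S ⊆ T ∧ #T = #S + 1, X T = ∑ b ∈ Sᶜ, X (insert b S) := by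
  rw [← sum_image (g := (insert · S)) (insert_inj_on' S)]
  congr 1
  ext T
  simp only [mem_filter, mem_univ, true_and, mem_image, mem_compl, ← exists_eq_insert_iff,
    eq_comm (a := #T)]

lemma sum_compl_sum_superset_insert (S : Finset E) (X : Finset E → M) :
    ∑ b ∈ Sᶜ, ∑ T with insert b S ⊆ T, X T = ∑ T with S ⊆ T, (#T - #S) • X T := by
  rw [sum_comm' (s' := fun T => T \ S) (t' := {T | S ⊆ T})
    (by simp [insert_subset_iff, and_comm, and_left_comm])]
  refine sum_congr rfl fun T hT => ?_
  rw [sum_const, card_sdiff_of_subset (mem_filter.1 hT).2]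

end Supersets

section Levels

variable {μ : Finset E → ℝ} {n k : ℕ} {S T : Finset E}

lemma piLev_of_card_ne (h : #S ≠ k) : piLev μ n k S = 0 :=
  if_neg h

lemma piLev_nonneg (hμ : ∀ S, 0 ≤ μ S) (k : ℕ) (S : Finset E) : 0 ≤ piLev μ n k S := by
  unfold piLev
  split_ifs
  · exact mul_nonneg (by positivity) (sum_nonneg fun T _ => hμ T)
  · exact le_rfl

lemma piLev_eq_zero_of_subset (hμ : ∀ S, 0 ≤ μ S) (hST : S ⊆ T) (hS : piLev μ n #S S = 0) :
    piLev μ n #T T = 0 := by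
  simp only [piLev, if_true, mul_eq_zero, inv_eq_zero, Nat.cast_eq_zero,
    Nat.choose_eq_zero_iff] at hS ⊢
  refine hS.imp (fun h => h.trans_le (card_le_card hST)) fun h => ?_
  rw [sum_eq_zero_iff_of_nonneg fun U _ => hμ U] at h ⊢
  exact fun U hU => h U (by simpa using hST.trans (mem_filter.1 hU).2)

lemma sum_piLev_insert (hsupp : ∀ S, #S ≠ n → μ S = 0) (hS : #S < n) :
    ∑ b, piLev μ n (#S + 1) (insert b S) = (#S + 1) * piLev μ n #S S := by
  have hnew : ∑ b, piLev μ n (#S + 1) (insert b S) =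
      (n.choose (#S + 1) : ℝ)⁻¹ * ∑ b ∈ Sᶜ, ∑ T with insert b S ⊆ T, μ T := by
    rw [mul_sum, ← sum_subset (subset_univ Sᶜ)]
    · refine sum_congr rfl fun b hb => ?_
      rw [piLev, if_pos (card_insert_of_notMem (mem_compl.1 hb))]
    · intro b _ hb
      exact piLev_of_card_ne (by simp [insert_eq_of_mem (notMem_compl.1 hb)])
  have hcount : ∑ T with S ⊆ T, (#T - #S) • μ T = (n - #S : ℕ) * ∑ T with S ⊆ T, μ T := by
    rw [mul_sum]
    refine sum_congr rfl fun T _ => ?_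
    by_cases hT : #T = n
    · rw [hT, nsmul_eq_mul]
    · simp [hsupp T hT]
  have hchoose : (n.choose (#S + 1) : ℝ) * (#S + 1) = n.choose #S * (n - #S : ℕ) := by
    exact_mod_cast n.choose_succ_right_eq #S
  have hpos : (n.choose #S : ℝ) ≠ 0 := by exact_mod_cast (Nat.choose_pos hS.le).ne'
  have hpos' : (n.choose (#S + 1) : ℝ) ≠ 0 := by exact_mod_cast (Nat.choose_pos hS).ne'
  rw [hnew, sum_compl_sum_superset_insert, hcount, piLev, if_pos rfl]
  field_simp
  linear_combination -(∑ T with S ⊆ T, μ T) * hchoose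

lemma piLoc_nonneg (hμ : ∀ S, 0 ≤ μ S) (S : Finset E) (a : E) : 0 ≤ piLoc μ n S a :=
  div_nonneg (piLev_nonneg hμ _ _) (mul_nonneg (by positivity) (piLev_nonneg hμ _ _))

lemma piLoc_of_mem {a : E} (ha : a ∈ S) : piLoc μ n S a = 0 := by
  rw [piLoc, piLev_of_card_ne (by simp [insert_eq_of_mem ha]), zero_div]

lemma sum_piLoc (hsupp : ∀ S, #S ≠ n → μ S = 0) (hS : #S < n) (hS0 : piLev μ n #S S ≠ 0) :
    ∑ a, piLoc μ n S a = 1 := by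
  simp only [piLoc, ← sum_div, sum_piLev_insert hsupp hS]
  exact div_self (mul_ne_zero (by positivity) hS0)

end Levels

section UpDown

variable {μ : Finset E → ℝ} {n k : ℕ}

lemma sum_Pup_mul (S : Finset E) (G : Finset E → ℝ) :
    ∑ T, Pup μ n #S S T * G T = ∑ b, piLoc μ n S b * G (insert b S) := by
  have hterm (T : Finset E) : Pup μ n #S S T * G T = if S ⊆ T ∧ #T = #S + 1 then
      piLev μ n (#S + 1) T / ((#S + 1) * piLev μ n #S S) * G T else 0 := by
    simp [Pup]
  simp only [hterm]
  rw [← sum_filter, sum_superset_card_succ]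
  refine sum_subset (subset_univ Sᶜ) fun b _ hb => ?_
  exact mul_eq_zero_of_left (piLoc_of_mem (notMem_compl.1 hb)) _

lemma sum_Pup (S : Finset E) : ∑ T, Pup μ n #S S T = ∑ b, piLoc μ n S b := by
  simpa using sum_Pup_mul (μ := μ) (n := n) S 1

lemma varw_Pup (S : Finset E) (f : Finset E → ℝ) :
    varw (Pup μ n #S S) f = varw (piLoc μ n S) fun b => f (insert b S) := by
  simp only [varw, sum_Pup_mul]

lemma Pup_mulVec_apply (S : Finset E) (f : Finset E → ℝ) :
    (Pup μ n #S).mulVec f S = ∑ b, piLoc μ n S b * f (insert b S) :=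
  sum_Pup_mul S f

lemma sum_Pdown_succ {T : Finset E} (hT : #T = k + 1) : ∑ S, Pdown (k + 1) T S = 1 := by
  have hfaces : ({S | S ⊆ T ∧ #S = k} : Finset (Finset E)) = powersetCard k T := by
    ext S; simp [mem_powersetCard]
  simp only [Pdown, Matrix.of_apply, hT, true_and, Nat.add_sub_cancel]
  rw [← sum_filter, hfaces, sum_const, card_powersetCard, hT, Nat.choose_succ_self_right,
    nsmul_eq_mul, mul_inv_cancel₀ (by positivity)]

lemma piLev_mul_Pdown (hμ : ∀ S, 0 ≤ μ S) (k : ℕ) (T S : Finset E) :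
    piLev μ n (k + 1) T * Pdown (k + 1) T S = piLev μ n k S * Pup μ n k S T := by
  by_cases h : S ⊆ T ∧ #S = k ∧ #T = k + 1
  · obtain ⟨hST, rfl, hT⟩ := h
    simp only [Pdown, Pup, Matrix.of_apply, hST, hT, Nat.add_sub_cancel, and_self, if_true]
    by_cases hS : piLev μ n #S S = 0
    · rw [← hT, piLev_eq_zero_of_subset hμ hST hS, hS, zero_mul, zero_mul]
    · push_cast
      field_simp
  · simp only [Pdown, Pup, Matrix.of_apply, Nat.add_sub_cancel, if_neg h, mul_zero, mul_eq_zero]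
    exact .inr (if_neg fun h' => h ⟨h'.1, h'.2.2, h'.2.1⟩)

lemma sum_piLev_succ_mul (hμ : ∀ S, 0 ≤ μ S) (k : ℕ) (G : Finset E → ℝ) :
    ∑ T, piLev μ n (k + 1) T * G T = ∑ S, piLev μ n k S * ∑ T, Pup μ n k S T * G T := by
  have hsplit (T : Finset E) :
      piLev μ n (k + 1) T * G T = ∑ S, piLev μ n k S * (Pup μ n k S T * G T) := by
    simp only [← mul_assoc, ← piLev_mul_Pdown hμ, ← sum_mul, ← mul_sum]
    by_cases hT : #T = k + 1
    · rw [sum_Pdown_succ hT, mul_one]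
    · simp only [piLev_of_card_ne hT, zero_mul]
  simp only [hsplit, mul_sum]
  exact sum_comm

lemma dirichletForm_Pdown_mul_Pup (hμ : ∀ S, 0 ≤ μ S) (hsupp : ∀ S, #S ≠ n → μ S = 0)
    (hk : k < n) (f : Finset E → ℝ) :
    dirichletForm (piLev μ n (k + 1)) (Pdown (k + 1) * Pup μ n k) f =
      ∑ S, piLev μ n k S * varw (Pup μ n k S) f := by
  refine dirichletForm_mul_eq_sum_varw (piLev_mul_Pdown hμ k) (fun S hS => ?_) f
  obtain rfl : #S = k := by_contra fun h => hS (piLev_of_card_ne h)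
  rw [sum_Pup, sum_piLoc hsupp hk hS]

end UpDown

section LocalWalk

variable {μ : Finset E → ℝ} {n : ℕ} {S : Finset E}

lemma localQ_nonneg (hμ : ∀ S, 0 ≤ μ S) (S : Finset E) (a b : E) : 0 ≤ localQ μ n S a b :=
  div_nonneg (piLev_nonneg hμ _ _) (mul_nonneg (by positivity) (piLev_nonneg hμ _ _))

lemma localQ_eq_piLoc_insert {a : E} (ha : a ∉ S) :
    localQ μ n S a = piLoc μ n (insert a S) := by
  ext b
  simp only [localQ, piLoc, Matrix.of_apply, card_insert_of_notMem ha]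
  push_cast
  ring_nf

lemma piLoc_mul_localQ (hμ : ∀ S, 0 ≤ μ S) (S : Finset E) (a b : E) :
    piLoc μ n S a * localQ μ n S a b =
      piLev μ n (#S + 2) (insert b (insert a S)) /
        ((#S + 1) * (#S + 2) * piLev μ n #S S) := by
  by_cases ha : piLev μ n (#S + 1) (insert a S) = 0
  · have hab : piLev μ n (#S + 2) (insert b (insert a S)) = 0 := by
      by_contra hne
      have hcard : #(insert b (insert a S)) = #S + 2 := by_contra fun h => hne (piLev_of_card_ne h)
      have hcard_a : #(insert a S) = #S + 1 := by
        have := card_insert_le b (insert a S)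
        have := card_insert_le a S
        omega
      rw [← hcard_a] at ha
      exact hne (hcard ▸ piLev_eq_zero_of_subset hμ (subset_insert b _) ha)
    simp [piLoc, ha, hab]
  · simp only [piLoc, localQ, Matrix.of_apply]
    field_simp

lemma piLoc_mul_localQ_comm (hμ : ∀ S, 0 ≤ μ S) (S : Finset E) (a b : E) :
    piLoc μ n S a * localQ μ n S a b = piLoc μ n S b * localQ μ n S b a := by
  rw [piLoc_mul_localQ hμ, piLoc_mul_localQ hμ, insert_comm]

lemma notMem_of_piLoc_ne_zero {a : E} (ha : piLoc μ n S a ≠ 0) : a ∉ S :=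
  fun h => ha (piLoc_of_mem h)

lemma sum_localQ (hsupp : ∀ S, #S ≠ n → μ S = 0) (hS : #S + 1 < n) {a : E}
    (ha : piLoc μ n S a ≠ 0) : ∑ b, localQ μ n S a b = 1 := by
  have haS := notMem_of_piLoc_ne_zero ha
  have hcard := card_insert_of_notMem haS
  rw [localQ_eq_piLoc_insert haS]
  refine sum_piLoc hsupp (hcard ▸ hS) fun h => ha ?_
  rw [piLoc, ← hcard, h, zero_div]

lemma two_mul_sub_one_mul_varw_Pup_le (hμ : ∀ S, 0 ≤ μ S) (hsupp : ∀ S, #S ≠ n → μ S = 0)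
    (hS : #S + 1 < n) {γ : ℝ}
    (hgap : ∀ g : E → ℝ, γ * varw (piLoc μ n S) g ≤
      dirichletForm (piLoc μ n S) (localQ μ n S) g) (f : Finset E → ℝ) :
    (2 * γ - 1) * varw (Pup μ n #S S) ((Pup μ n (#S + 1)).mulVec f) ≤
      ∑ T, Pup μ n #S S T * varw (Pup μ n (#S + 1) T) f := by
  rw [varw_Pup, sum_Pup_mul]
  set g : E → ℝ := fun a => (Pup μ n (#S + 1)).mulVec f (insert a S) with hg
  have hmean (a : E) (ha : piLoc μ n S a ≠ 0) :
      g a = ∑ b, localQ μ n S a b * f (insert b (insert a S)) := by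
    have haS := notMem_of_piLoc_ne_zero ha
    simp only [hg, localQ_eq_piLoc_insert haS, ← card_insert_of_notMem haS, Pup_mulVec_apply]
  have hvar (a : E) : piLoc μ n S a * varw (localQ μ n S a) (fun b => f (insert b (insert a S))) =
      piLoc μ n S a * varw (Pup μ n (#S + 1) (insert a S)) f := by
    by_cases haS : a ∈ S
    · rw [piLoc_of_mem haS, zero_mul, zero_mul]
    · rw [localQ_eq_piLoc_insert haS, ← card_insert_of_notMem haS, varw_Pup]
  calc (2 * γ - 1) * varw (piLoc μ n S) g
      ≤ 2 * dirichletForm (piLoc μ n S) (localQ μ n S) g - varw (piLoc μ n S) g := by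
        linarith [hgap g]
    _ ≤ ∑ a, piLoc μ n S a * varw (localQ μ n S a) (fun b => f (insert b (insert a S))) :=
        two_mul_dirichletForm_sub_varw_le (piLoc_nonneg hμ S) (localQ_nonneg hμ S)
          (piLoc_mul_localQ_comm hμ S) (fun _ => sum_localQ hsupp hS)
          (fun a b => by rw [insert_comm]) hmean
    _ = ∑ a, piLoc μ n S a * varw (Pup μ n (#S + 1) (insert a S)) f :=
        sum_congr rfl fun a _ => hvar a

end LocalWalk

/-- for any `f^{(k+1)}` on level `k+1` with projection
`f^{(k)} = P↑_k f^{(k+1)}`, the down-up Dirichlet forms satisfy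
`E_{P_{k+1}^∇}(f^{(k+1)}) ≥ (2γ_{k-1} − 1)·E_{P_k^∇}(f^{(k)})`, where `γ_{k-1}`
lower bounds the spectral gap of every local walk at a face of size `k−1`. -/
theorem downup_dirichlet_improved_step (μ : Finset E → ℝ) (n k : ℕ)
    (hk : 1 ≤ k) (hkn : k + 1 ≤ n) (hμ : IsDistOn μ n) (γ : ℝ)
    (hloc : ∀ η : Finset E, η.card = k - 1 → 0 < piLev μ n (k - 1) η →
      ∀ g : E → ℝ, γ * varw (piLoc μ n η) g ≤
        dirichletForm (piLoc μ n η) (localQ μ n η) g)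
    (f : Finset E → ℝ) :
    (2 * γ - 1) *
        dirichletForm (piLev μ n k) (Pdown k * Pup μ n (k - 1)) ((Pup μ n k).mulVec f) ≤
      dirichletForm (piLev μ n (k + 1)) (Pdown (k + 1) * Pup μ n k) f := by
  obtain ⟨hμ_nonneg, hsupp, -⟩ := hμ
  obtain ⟨j, rfl⟩ : ∃ j, k = j + 1 := ⟨k - 1, by omega⟩
  rw [Nat.add_sub_cancel] at hloc ⊢
  rw [dirichletForm_Pdown_mul_Pup hμ_nonneg hsupp (by omega),
    dirichletForm_Pdown_mul_Pup hμ_nonneg hsupp hkn, sum_piLev_succ_mul hμ_nonneg, mul_sum]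
  refine sum_le_sum fun η _ => ?_
  by_cases hη : piLev μ n j η = 0
  · simp [hη]
  have hη_nonneg : 0 ≤ piLev μ n j η := piLev_nonneg hμ_nonneg j η
  obtain rfl : #η = j := by_contra fun h => hη (piLev_of_card_ne h)
  have hgap := hloc η rfl (hη_nonneg.lt_of_ne' hη)
  rw [mul_left_comm]
  exact mul_le_mul_of_nonneg_left
    (two_mul_sub_one_mul_varw_Pup_le hμ_nonneg hsupp hkn hgap f) hη_nonneg
end

section
/- For any matroid M of rank r, the bases-exchange walk (the down-up walk on bases) has spectral gap at least 1/r, and hence its mixing time is O(r²·log n) where n is the size of the ground set. -/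
open Finset
open scoped Classical

/-!
The bases of a matroid form a pure complex whose vertex links are again the bases of matroids. In
rank two the 1-skeleton is complete multipartite, parallelism being an equivalence relation, so its
adjacency matrix has only one positive eigenvalue. Oppenheim's trickle-down theorem propagates this
to all links of higher rank: with `A` the codegree matrix, `D` its diagonal matrix of row sums and
`L = D - A`, one tests the local bound on a solution `h` of `L h = D g`. The random walk theorem is
an induction over vertex links: each step compares a function with the sum of its link means, and
the local gap controls the quadratic form of these means. Finally, the down-up walk is positive
semidefinite, so its spectral gap contracts mean-zero functions and bounds the mixing time.
-/

open Matrix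
open scoped FinsetFamily

section SquaredDeviation

variable {ι : Type*}

/-- The sum of the squared deviations of `f` from its mean over `s`, which is `#s` times the
variance of `f` under the uniform distribution on `s`. -/
noncomputable def sqDev (s : Finset ι) (f : ι → ℝ) : ℝ :=
  ∑ i ∈ s, (f i - (∑ j ∈ s, f j) / #s) ^ 2

theorem sqDev_nonneg (s : Finset ι) (f : ι → ℝ) : 0 ≤ sqDev s f :=
  sum_nonneg fun _ _ => sq_nonneg _

theorem sqDev_eq_sum_sq_sub (s : Finset ι) (f : ι → ℝ) :
    sqDev s f = ∑ i ∈ s, f i ^ 2 - (∑ i ∈ s, f i) ^ 2 / #s := by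
  obtain rfl | hs := s.eq_empty_or_nonempty
  · simp [sqDev]
  have hcard : (#s : ℝ) ≠ 0 := by simpa using hs.ne_empty
  simp only [sqDev, sub_sq, sum_add_distrib, sum_sub_distrib, ← sum_mul, ← mul_sum, sum_const,
    nsmul_eq_mul]
  field_simp
  ring

end SquaredDeviation

section WeightedLaplacian

variable {V : Type*} [Fintype V] {K A : Matrix V V ℝ}

/-- The Fredholm alternative for a real symmetric matrix. -/
theorem exists_mulVec_eq_of_forall_dotProduct_eq_zero (hK : K.IsSymm) {w : V → ℝ}
    (hw : ∀ k, K *ᵥ k = 0 → w ⬝ᵥ k = 0) : ∃ h, K *ᵥ h = w := by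
  classical
  have hsymm : (toEuclideanLin K).IsSymmetric :=
    isSymmetric_toEuclideanLin_iff.2 (by rwa [IsHermitian, conjTranspose_eq_transpose_of_trivial])
  have hmem : WithLp.toLp 2 w ∈ (toEuclideanLin K).range := by
    rw [← Submodule.orthogonal_orthogonal (toEuclideanLin K).range, hsymm.orthogonal_range,
      Submodule.mem_orthogonal']
    intro k hk
    have hker : K *ᵥ k.ofLp = 0 := by simpa [toEuclideanLin] using congrArg WithLp.ofLp hk
    simpa [PiLp.inner_apply, dotProduct, mul_comm] using hw k.ofLp hker
  obtain ⟨h, hh⟩ := hmem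
  exact ⟨h.ofLp, by simpa [toEuclideanLin] using congrArg WithLp.ofLp hh⟩

variable [DecidableEq V]

/-- The Laplacian of the weighted graph on `V` whose edges `{x, y}` carry the weights `K x y`. -/
def weightedLaplacian (K : Matrix V V ℝ) : Matrix V V ℝ :=
  diagonal (K *ᵥ 1) - K

theorem weightedLaplacian_isSymm (hK : K.IsSymm) : (weightedLaplacian K).IsSymm :=
  (isSymm_diagonal _).sub hK

theorem weightedLaplacian_mulVec (K : Matrix V V ℝ) (f : V → ℝ) :
    weightedLaplacian K *ᵥ f = (K *ᵥ 1) * f - K *ᵥ f := by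
  ext x
  simp [weightedLaplacian, sub_mulVec, mulVec_diagonal]

theorem dotProduct_weightedLaplacian_mulVec (hK : K.IsSymm) (f : V → ℝ) :
    f ⬝ᵥ weightedLaplacian K *ᵥ f = (1 / 2) * ∑ x, ∑ y, K x y * (f x - f y) ^ 2 := by
  have hswap : ∑ x, ∑ y, K x y * f y ^ 2 = ∑ x, ∑ y, K x y * f x ^ 2 := by
    rw [sum_comm]
    simp only [hK.apply]
  have hleft : f ⬝ᵥ weightedLaplacian K *ᵥ f
      = ∑ x, ∑ y, K x y * f x ^ 2 - ∑ x, ∑ y, K x y * (f x * f y) := by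
    rw [weightedLaplacian_mulVec, dotProduct_sub]
    simp only [dotProduct, mulVec, Pi.mul_apply, Pi.one_apply, mul_one, mul_sum, sum_mul]
    congr 1 <;> exact sum_congr rfl fun x _ => sum_congr rfl fun y _ => by ring
  have hright : ∑ x, ∑ y, K x y * (f x - f y) ^ 2 = ∑ x, ∑ y, K x y * f x ^ 2
      - 2 * ∑ x, ∑ y, K x y * (f x * f y) + ∑ x, ∑ y, K x y * f y ^ 2 := by
    simp only [mul_sum, ← sum_add_distrib, ← sum_sub_distrib]
    refine sum_congr rfl fun x _ => sum_congr rfl fun y _ => ?_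
    ring
  rw [hleft, hright, hswap]
  ring

theorem dotProduct_weightedLaplacian_mulVec_nonneg (hK : K.IsSymm) (hpos : ∀ x y, 0 ≤ K x y)
    (f : V → ℝ) : 0 ≤ f ⬝ᵥ weightedLaplacian K *ᵥ f := by
  rw [dotProduct_weightedLaplacian_mulVec hK]
  exact mul_nonneg one_half_pos.le <| sum_nonneg fun x _ => sum_nonneg fun y _ =>
    mul_nonneg (hpos x y) (sq_nonneg _)

theorem eq_of_weightedLaplacian_mulVec_eq_zero (hK : K.IsSymm) (hpos : ∀ x y, 0 ≤ K x y)
    {f : V → ℝ} (hf : weightedLaplacian K *ᵥ f = 0) {x y : V}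
    (hxy : Relation.ReflTransGen (fun a b => K a b ≠ 0) x y) : f x = f y := by
  have hterm : ∀ a b, 0 ≤ K a b * (f a - f b) ^ 2 := fun a b => mul_nonneg (hpos a b) (sq_nonneg _)
  have hsum : ∑ a, ∑ b, K a b * (f a - f b) ^ 2 = 0 := by
    have henergy := dotProduct_weightedLaplacian_mulVec hK f
    rw [hf, dotProduct_zero] at henergy
    linarith
  have hzero : ∀ a b, K a b * (f a - f b) ^ 2 = 0 := fun a b =>
    (sum_eq_zero_iff_of_nonneg fun b _ => hterm a b).1
      ((sum_eq_zero_iff_of_nonneg fun a _ => sum_nonneg fun b _ => hterm a b).1 hsum a (mem_univ a))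
      b (mem_univ b)
  induction hxy with
  | refl => rfl
  | @tail b c _ hbc ih =>
    have hsq : (f b - f c) ^ 2 = 0 := (mul_eq_zero.1 (hzero b c)).resolve_left hbc
    rw [ih, sub_eq_zero.1 (pow_eq_zero_iff two_ne_zero |>.1 hsq)]

theorem exists_weightedLaplacian_mulVec_eq (hA : A.IsSymm) (hpos : ∀ x y, 0 ≤ A x y)
    (hconn : ∀ x y, (A *ᵥ 1) x ≠ 0 → (A *ᵥ 1) y ≠ 0 →
      Relation.ReflTransGen (fun a b => A a b ≠ 0) x y)
    {g : V → ℝ} (hg : (A *ᵥ 1) ⬝ᵥ g = 0) : ∃ h, weightedLaplacian A *ᵥ h = (A *ᵥ 1) * g := by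
  refine exists_mulVec_eq_of_forall_dotProduct_eq_zero (weightedLaplacian_isSymm hA) fun k hk => ?_
  by_cases hd : ∃ x, (A *ᵥ 1) x ≠ 0
  · obtain ⟨x₀, hx₀⟩ := hd
    have hconst : ∀ x, (A *ᵥ 1) x * g x * k x = (A *ᵥ 1) x * g x * k x₀ := by
      intro x
      by_cases hx : (A *ᵥ 1) x = 0
      · simp only [hx, zero_mul]
      · rw [eq_of_weightedLaplacian_mulVec_eq_zero hA hpos hk (hconn x x₀ hx hx₀)]
    calc ((A *ᵥ 1) * g) ⬝ᵥ k = ((A *ᵥ 1) ⬝ᵥ g) * k x₀ := by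
          simp only [dotProduct, Pi.mul_apply, hconst, sum_mul]
      _ = 0 := by rw [hg, zero_mul]
  · push Not at hd
    simp [dotProduct, hd]

omit [DecidableEq V] in
/-- Oppenheim's trickle-down step. With `L` the Laplacian of `A` and `D = diagonal (A *ᵥ 1)`, the
bound on `A` follows by testing `hlocal` on a solution `h` of `L h = D g`. -/
theorem dotProduct_mulVec_nonpos_of_trickleDown (hA : A.IsSymm) (hpos : ∀ x y, 0 ≤ A x y)
    (hconn : ∀ x y, (A *ᵥ 1) x ≠ 0 → (A *ᵥ 1) y ≠ 0 →
      Relation.ReflTransGen (fun a b => A a b ≠ 0) x y)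
    (hlocal : ∀ h, h ⬝ᵥ A *ᵥ h ≤ ∑ x, (A *ᵥ h) x ^ 2 / (A *ᵥ 1) x)
    {g : V → ℝ} (hg : (A *ᵥ 1) ⬝ᵥ g = 0) : g ⬝ᵥ A *ᵥ g ≤ 0 := by
  classical
  obtain ⟨h, hh⟩ := exists_weightedLaplacian_mulVec_eq hA hpos hconn hg
  set d := A *ᵥ 1
  have hAh : A *ᵥ h = d * (h - g) := by
    rw [weightedLaplacian_mulVec] at hh
    rw [mul_sub, ← hh]
    abel
  have hcross : (d * h) ⬝ᵥ g ≤ (d * g) ⬝ᵥ g := by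
    have hterm : ∀ x, (d * (h - g)) x ^ 2 / d x = d x * (h x - g x) ^ 2 := by
      intro x
      by_cases hx : d x = 0
      · simp [hx]
      · simp only [Pi.mul_apply, Pi.sub_apply]
        field_simp
    have hloc := sub_nonneg.2 (hlocal h)
    simp only [hAh, hterm, dotProduct, ← sum_sub_distrib] at hloc
    rw [← sub_nonneg, dotProduct, dotProduct, ← sum_sub_distrib]
    refine hloc.trans_eq (sum_congr rfl fun x _ => ?_)
    simp only [Pi.mul_apply, Pi.sub_apply]
    ring
  have hpsd : 0 ≤ (d * h) ⬝ᵥ g - (d * g) ⬝ᵥ g - g ⬝ᵥ A *ᵥ g := by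
    have hL : weightedLaplacian A *ᵥ (g - h) = -(A *ᵥ g) := by
      rw [mulVec_sub, hh, weightedLaplacian_mulVec]
      abel
    have hsymm : h ⬝ᵥ A *ᵥ g = (d * (h - g)) ⬝ᵥ g := by
      rw [dotProduct_mulVec, ← mulVec_transpose, hA.eq, hAh]
    have hnonneg := dotProduct_weightedLaplacian_mulVec_nonneg hA hpos (g - h)
    rw [hL, dotProduct_neg, sub_dotProduct, hsymm, mul_sub, sub_dotProduct] at hnonneg
    linarith
  linarith

end WeightedLaplacian

section Links

variable {E : Type*} {𝓑 : Finset (Finset E)} {n : ℕ}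

/-- The sum of `g` over all incidences between a vertex and a member of `𝓑`. -/
def vertexSum (𝓑 : Finset (Finset E)) (g : E → ℝ) : ℝ :=
  ∑ B ∈ 𝓑, ∑ x ∈ B, g x

/-- The sum of `g x * g y` over all ordered pairs of distinct vertices of a member of `𝓑`, i.e.
the unnormalised quadratic form of the random walk on the 1-skeleton of `𝓑`. -/
def pairSum (𝓑 : Finset (Finset E)) (g : E → ℝ) : ℝ :=
  ∑ B ∈ 𝓑, ((∑ x ∈ B, g x) ^ 2 - ∑ x ∈ B, g x ^ 2)

/-- The second eigenvalue of the random walk on the 1-skeleton of `𝓑` is nonpositive, i.e. this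
walk has spectral gap at least `1`. -/
def HasLocalGap (𝓑 : Finset (Finset E)) : Prop :=
  ∀ g : E → ℝ, vertexSum 𝓑 g = 0 → pairSum 𝓑 g ≤ 0

theorem hasLocalGap_of_card_le_one (h𝓑 : ∀ B ∈ 𝓑, #B ≤ 1) : HasLocalGap 𝓑 := by
  refine fun g _ => (sum_eq_zero fun B hB => ?_).le
  obtain hB | hB := Nat.le_one_iff_eq_zero_or_eq_one.1 (h𝓑 B hB)
  · simp [card_eq_zero.1 hB]
  · obtain ⟨b, rfl⟩ := card_eq_one.1 hB
    simp

theorem vertexSum_const (hn : (𝓑 : Set (Finset E)).Sized n) (c : ℝ) :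
    vertexSum 𝓑 (fun _ => c) = #𝓑 * (n * c) := by
  simp only [vertexSum, sum_const, nsmul_eq_mul]
  rw [sum_congr rfl fun B hB => by rw [hn hB], sum_const, nsmul_eq_mul]

theorem vertexSum_sub_const (hn : (𝓑 : Set (Finset E)).Sized n) (g : E → ℝ) (c : ℝ) :
    vertexSum 𝓑 (fun x => g x - c) = vertexSum 𝓑 g - #𝓑 * (n * c) := by
  rw [← vertexSum_const hn]
  simp only [vertexSum, sum_sub_distrib]

theorem pairSum_sub_const (hn : (𝓑 : Set (Finset E)).Sized (n + 1)) (g : E → ℝ) (c : ℝ) :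
    pairSum 𝓑 (fun x => g x - c)
      = pairSum 𝓑 g - 2 * n * c * vertexSum 𝓑 g + n * (n + 1) * #𝓑 * c ^ 2 := by
  have hmember : ∀ B ∈ 𝓑, (∑ x ∈ B, (g x - c)) ^ 2 - ∑ x ∈ B, (g x - c) ^ 2
      = ((∑ x ∈ B, g x) ^ 2 - ∑ x ∈ B, g x ^ 2) - 2 * n * c * ∑ x ∈ B, g x
        + n * (n + 1) * c ^ 2 := by
    intro B hB
    simp only [sub_sq, sum_sub_distrib, sum_add_distrib, sum_const, hn hB, nsmul_eq_mul,
      ← sum_mul, ← mul_sum]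
    push_cast
    ring
  rw [pairSum, sum_congr rfl hmember]
  simp only [pairSum, vertexSum, sum_sub_distrib, sum_add_distrib, sum_const, nsmul_eq_mul,
    ← mul_sum]
  ring

theorem HasLocalGap.pairSum_le (hgap : HasLocalGap 𝓑) (hn : (𝓑 : Set (Finset E)).Sized (n + 1))
    (g : E → ℝ) : pairSum 𝓑 g ≤ n * (vertexSum 𝓑 g ^ 2 / ((n + 1) * #𝓑)) := by
  obtain rfl | hne := 𝓑.eq_empty_or_nonempty
  · simp [pairSum, vertexSum]
  have hcard : (#𝓑 : ℝ) ≠ 0 := by simpa using hne.ne_empty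
  have hcentred := hgap (fun x => g x - vertexSum 𝓑 g / ((n + 1) * #𝓑)) (by
    rw [vertexSum_sub_const hn]
    push_cast
    field_simp
    ring)
  rw [pairSum_sub_const hn] at hcentred
  rw [← sub_nonpos]
  refine le_of_eq_of_le ?_ hcentred
  field_simp
  ring

variable [DecidableEq E]

theorem sized_memberSubfamily (hn : (𝓑 : Set (Finset E)).Sized (n + 1)) (z : E) :
    (𝓑.memberSubfamily z : Set (Finset E)).Sized n := by
  intro T hT
  obtain ⟨hins, hz⟩ := mem_memberSubfamily.1 (mem_coe.1 hT)
  simpa [card_insert_of_notMem hz] using hn hins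

/-- The matrix counting, for each pair of distinct vertices, the members of `𝓑` that contain both;
up to normalisation it is the transition matrix of the random walk on the 1-skeleton of `𝓑`. -/
def codegree (𝓑 : Finset (Finset E)) : Matrix E E ℝ :=
  of fun x y => (#((𝓑.memberSubfamily x).memberSubfamily y) : ℝ)

theorem memberSubfamily_memberSubfamily_comm (𝓑 : Finset (Finset E)) (x y : E) :
    (𝓑.memberSubfamily x).memberSubfamily y = (𝓑.memberSubfamily y).memberSubfamily x := by
  ext T
  simp only [mem_memberSubfamily, mem_insert, insert_comm x y]
  grind

theorem codegree_isSymm (𝓑 : Finset (Finset E)) : (codegree 𝓑).IsSymm := by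
  ext x y
  simp only [codegree, transpose_apply, of_apply, memberSubfamily_memberSubfamily_comm 𝓑 x y]

theorem codegree_ne_zero_iff {x y : E} :
    codegree 𝓑 x y ≠ 0 ↔ x ≠ y ∧ ∃ B ∈ 𝓑, x ∈ B ∧ y ∈ B := by
  simp only [codegree, of_apply, Nat.cast_ne_zero, card_ne_zero]
  constructor
  · rintro ⟨T, hT⟩
    simp only [mem_memberSubfamily, mem_insert, not_or] at hT
    exact ⟨hT.1.2.1, _, hT.1.1, by simp, by simp⟩
  · rintro ⟨hxy, B, hB, hx, hy⟩
    refine ⟨(B.erase x).erase y, ?_⟩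
    simp [mem_memberSubfamily, insert_erase, hx, hy, hB, hxy.symm]

variable [Fintype E]

theorem sum_memberSubfamily {M : Type*} [AddCommMonoid M] (𝓑 : Finset (Finset E))
    (F : E → Finset E → M) :
    ∑ z, ∑ T ∈ 𝓑.memberSubfamily z, F z T = ∑ B ∈ 𝓑, ∑ z ∈ B, F z (B.erase z) := by
  rw [sum_sigma', sum_sigma']
  refine sum_bij' (fun p _ => ⟨insert p.1 p.2, p.1⟩)
    (fun p _ => ⟨p.2, p.1.erase p.2⟩) ?_ ?_ ?_ ?_ ?_ <;>
    simp +contextual [mem_memberSubfamily, insert_erase]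

theorem vertexSum_eq_sum_card_memberSubfamily (𝓑 : Finset (Finset E)) (g : E → ℝ) :
    vertexSum 𝓑 g = ∑ z, #(𝓑.memberSubfamily z) * g z := by
  rw [vertexSum, ← sum_memberSubfamily 𝓑 fun z _ => g z]
  simp only [sum_const, nsmul_eq_mul]

theorem sum_pairSum_memberSubfamily (hn : (𝓑 : Set (Finset E)).Sized (n + 2)) (g : E → ℝ) :
    ∑ z, pairSum (𝓑.memberSubfamily z) g = n * pairSum 𝓑 g := by
  simp only [pairSum]
  rw [sum_memberSubfamily 𝓑 fun _ T => (∑ x ∈ T, g x) ^ 2 - ∑ x ∈ T, g x ^ 2, mul_sum]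
  refine sum_congr rfl fun B hB => ?_
  rw [sum_congr rfl fun z hz => by rw [sum_erase_eq_sub hz, sum_erase_eq_sub hz]]
  simp only [sub_sq, sum_sub_distrib, sum_add_distrib, sum_const, nsmul_eq_mul, hn hB, ← mul_sum]
  push_cast
  ring

theorem codegree_mulVec (𝓑 : Finset (Finset E)) (g : E → ℝ) (x : E) :
    (codegree 𝓑 *ᵥ g) x = vertexSum (𝓑.memberSubfamily x) g :=
  (vertexSum_eq_sum_card_memberSubfamily _ g).symm

theorem codegree_mulVec_one (hn : (𝓑 : Set (Finset E)).Sized (n + 1)) (x : E) :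
    (codegree 𝓑 *ᵥ 1) x = n * #(𝓑.memberSubfamily x) := by
  rw [codegree_mulVec, Pi.one_def, vertexSum_const (sized_memberSubfamily hn x)]
  ring

theorem dotProduct_codegree_mulVec (𝓑 : Finset (Finset E)) (g : E → ℝ) :
    g ⬝ᵥ codegree 𝓑 *ᵥ g = pairSum 𝓑 g := by
  simp only [dotProduct, codegree_mulVec, vertexSum, mul_sum]
  rw [sum_memberSubfamily 𝓑 fun z T => ∑ x ∈ T, g z * g x]
  refine sum_congr rfl fun B _ => ?_
  rw [sum_congr rfl fun z hz => sum_erase_eq_sub (f := fun x => g z * g x) hz, sum_sub_distrib,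
    sq, sum_mul_sum]
  simp only [sq]

omit [Fintype E] in
/-- Oppenheim's trickle-down theorem in the case of local gap `1`. -/
theorem hasLocalGap_of_memberSubfamily [Finite E] (hn : (𝓑 : Set (Finset E)).Sized (n + 3))
    (hlinks : ∀ z, HasLocalGap (𝓑.memberSubfamily z))
    (hconn : ∀ B ∈ 𝓑, ∀ B' ∈ 𝓑, ∀ x ∈ B, ∀ y ∈ B',
      Relation.ReflTransGen (fun a b => a ≠ b ∧ ∃ C ∈ 𝓑, a ∈ C ∧ b ∈ C) x y) :
    HasLocalGap 𝓑 := by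
  cases nonempty_fintype E
  intro g hg
  rw [← dotProduct_codegree_mulVec]
  refine dotProduct_mulVec_nonpos_of_trickleDown (codegree_isSymm 𝓑)
    (fun x y => by simp [codegree]) (fun x y hx hy => ?_) (fun h => ?_) ?_
  · have hne : ∀ z, (codegree 𝓑 *ᵥ 1) z ≠ 0 → ∃ B ∈ 𝓑, z ∈ B := by
      intro z hz
      rw [codegree_mulVec_one hn] at hz
      obtain ⟨T, hT⟩ := card_ne_zero.1 (Nat.cast_ne_zero.1 (right_ne_zero_of_mul hz))
      exact ⟨insert z T, (mem_memberSubfamily.1 hT).1, mem_insert_self z T⟩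
    obtain ⟨⟨B, hB, hxB⟩, B', hB', hyB'⟩ := And.intro (hne x hx) (hne y hy)
    simpa only [codegree_ne_zero_iff] using hconn B hB B' hB' x hxB y hyB'
  · have hsum := sum_le_sum fun z (_ : z ∈ univ) =>
      (hlinks z).pairSum_le (sized_memberSubfamily hn z) h
    rw [sum_pairSum_memberSubfamily hn, ← mul_sum] at hsum
    rw [dotProduct_codegree_mulVec]
    refine (le_of_mul_le_mul_left hsum (by positivity)).trans_eq (sum_congr rfl fun z _ => ?_)
    rw [codegree_mulVec, codegree_mulVec_one hn]
    push_cast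
    ring
  · simp only [dotProduct, codegree_mulVec_one hn, mul_assoc, ← mul_sum,
      ← vertexSum_eq_sum_card_memberSubfamily, hg, mul_zero]

end Links

section RandomWalkTheorem

variable {E : Type*} [DecidableEq E] {𝓑 : Finset (Finset E)} {n : ℕ}

theorem shadow_memberSubfamily (𝓑 : Finset (Finset E)) (z : E) :
    ∂ (𝓑.memberSubfamily z) = (∂ 𝓑).memberSubfamily z := by
  ext T
  simp only [mem_memberSubfamily, mem_shadow_iff_insert_mem, mem_insert, insert_comm z]
  grind

/-- The mean of `f` over the members of `𝓑` containing `z`, with value `0` if there are none. -/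
noncomputable def linkMean (𝓑 : Finset (Finset E)) (f : Finset E → ℝ) (z : E) : ℝ :=
  (∑ T ∈ 𝓑.memberSubfamily z, f (insert z T)) / #(𝓑.memberSubfamily z)

theorem card_mul_linkMean (𝓑 : Finset (Finset E)) (f : Finset E → ℝ) (z : E) :
    #(𝓑.memberSubfamily z) * linkMean 𝓑 f z = ∑ T ∈ 𝓑.memberSubfamily z, f (insert z T) := by
  obtain hz | hz := (𝓑.memberSubfamily z).eq_empty_or_nonempty
  · simp [hz]
  · exact mul_div_cancel₀ _ (by simpa using hz.ne_empty)

variable [Fintype E]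

theorem sum_mul_sum_memberSubfamily (𝓑 : Finset (Finset E)) (g : E → ℝ) (f : Finset E → ℝ) :
    ∑ z, g z * ∑ T ∈ 𝓑.memberSubfamily z, f (insert z T) = ∑ B ∈ 𝓑, f B * ∑ z ∈ B, g z := by
  simp only [mul_sum]
  rw [sum_memberSubfamily 𝓑 fun z T => g z * f (insert z T)]
  refine sum_congr rfl fun B _ => sum_congr rfl fun z hz => ?_
  rw [insert_erase hz, mul_comm]

theorem sum_sum_memberSubfamily (hn : (𝓑 : Set (Finset E)).Sized n) (f : Finset E → ℝ) :
    ∑ z, ∑ T ∈ 𝓑.memberSubfamily z, f (insert z T) = n * ∑ B ∈ 𝓑, f B := by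
  have hsum := sum_mul_sum_memberSubfamily 𝓑 1 f
  simp only [Pi.one_apply, one_mul, sum_const, nsmul_eq_mul, mul_one] at hsum
  rw [hsum, mul_sum]
  exact sum_congr rfl fun B hB => by rw [hn hB, mul_comm]

omit [Fintype E] in
theorem vertexSum_linkMean [Finite E] (hn : (𝓑 : Set (Finset E)).Sized n) (f : Finset E → ℝ) :
    vertexSum 𝓑 (linkMean 𝓑 f) = n * ∑ B ∈ 𝓑, f B := by
  cases nonempty_fintype E
  simp only [vertexSum_eq_sum_card_memberSubfamily, card_mul_linkMean, sum_sum_memberSubfamily hn]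

omit [Fintype E] in
theorem sum_mul_sum_linkMean [Finite E] (𝓑 : Finset (Finset E)) (f : Finset E → ℝ) :
    ∑ B ∈ 𝓑, f B * ∑ z ∈ B, linkMean 𝓑 f z = vertexSum 𝓑 (linkMean 𝓑 f ^ 2) := by
  cases nonempty_fintype E
  rw [← sum_mul_sum_memberSubfamily, vertexSum_eq_sum_card_memberSubfamily]
  refine sum_congr rfl fun z _ => ?_
  rw [← card_mul_linkMean, Pi.pow_apply]
  ring

theorem sum_sqDev_memberSubfamily (hn : (𝓑 : Set (Finset E)).Sized n) (f : Finset E → ℝ) :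
    ∑ z, sqDev (𝓑.memberSubfamily z) (fun T => f (insert z T))
      = n * ∑ B ∈ 𝓑, f B ^ 2 - vertexSum 𝓑 (linkMean 𝓑 f ^ 2) := by
  simp only [sqDev_eq_sum_sq_sub, sum_sub_distrib, sum_sum_memberSubfamily hn fun B => f B ^ 2]
  rw [← sum_mul_sum_linkMean, ← sum_mul_sum_memberSubfamily]
  congr 1
  refine sum_congr rfl fun z _ => ?_
  rw [linkMean]
  ring

/-- The local gap is applied to the link means of `f`, and the deviation of `f` from their sum over
each member of `𝓑` is nonnegative. -/
theorem HasLocalGap.mul_sqDev_le (hgap : HasLocalGap 𝓑)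
    (hn : (𝓑 : Set (Finset E)).Sized (n + 1)) (f : Finset E → ℝ) :
    n * sqDev 𝓑 f ≤ ∑ z, sqDev (𝓑.memberSubfamily z) fun T => f (insert z T) := by
  have hvertex : vertexSum 𝓑 (linkMean 𝓑 f) = (n + 1) * ∑ B ∈ 𝓑, f B :=
    mod_cast vertexSum_linkMean hn f
  have hdev : ∑ B ∈ 𝓑, (∑ z ∈ B, linkMean 𝓑 f z) ^ 2 + ∑ B ∈ 𝓑, f B ^ 2
      - 2 * vertexSum 𝓑 (linkMean 𝓑 f ^ 2) - n ^ 2 * ((∑ B ∈ 𝓑, f B) ^ 2 / #𝓑)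
      = sqDev 𝓑 fun B => f B - ∑ z ∈ B, linkMean 𝓑 f z := by
    rw [vertexSum] at hvertex
    simp only [sqDev_eq_sum_sq_sub, sub_sq, sum_sub_distrib, sum_add_distrib, mul_assoc, ← mul_sum,
      sum_mul_sum_linkMean, hvertex]
    ring
  have hpair : ∑ B ∈ 𝓑, (∑ z ∈ B, linkMean 𝓑 f z) ^ 2 - vertexSum 𝓑 (linkMean 𝓑 f ^ 2)
      ≤ n * (n + 1) * ((∑ B ∈ 𝓑, f B) ^ 2 / #𝓑) := by
    have hle := hgap.pairSum_le hn (linkMean 𝓑 f)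
    rw [pairSum, sum_sub_distrib, hvertex] at hle
    refine hle.trans_eq ?_
    field_simp
  have hnonneg := sqDev_nonneg 𝓑 fun B => f B - ∑ z ∈ B, linkMean 𝓑 f z
  rw [sum_sqDev_memberSubfamily hn, sqDev_eq_sum_sq_sub]
  push_cast
  linarith

/-- The vertices extending `T` to a member of `𝓑`, i.e. the link of `T` when `𝓑` is the family of
facets of a complex and `T` has codimension one. -/
def extensions (𝓑 : Finset (Finset E)) (T : Finset E) : Finset E :=
  {e | e ∉ T ∧ insert e T ∈ 𝓑}

theorem mem_extensions {T : Finset E} {e : E} :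
    e ∈ extensions 𝓑 T ↔ e ∉ T ∧ insert e T ∈ 𝓑 := by
  simp [extensions]

/-- The Dirichlet form of the down-up walk on `𝓑`, up to normalisation: the sum, over the faces `T`
of codimension one, of the squared deviations of `f` over the members of `𝓑` above `T`. -/
noncomputable def downUpEnergy (𝓑 : Finset (Finset E)) (f : Finset E → ℝ) : ℝ :=
  ∑ T ∈ ∂ 𝓑, sqDev (extensions 𝓑 T) fun e => f (insert e T)

/-- A family of `n`-sets which has, together with all its iterated vertex links, local gap at
least `1`. -/
def IsLocalExpander : ℕ → Finset (Finset E) → Prop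
  | 0, _ => True
  | n + 1, 𝓑 => HasLocalGap 𝓑 ∧ ∀ z, IsLocalExpander n (𝓑.memberSubfamily z)

theorem extensions_memberSubfamily {T : Finset E} {z : E} (hz : z ∉ T) :
    extensions (𝓑.memberSubfamily z) T = extensions 𝓑 (insert z T) := by
  ext e
  simp only [mem_extensions, mem_memberSubfamily, mem_insert, insert_comm z]
  grind

theorem sum_downUpEnergy_memberSubfamily (hn : (𝓑 : Set (Finset E)).Sized (n + 1))
    (f : Finset E → ℝ) :
    ∑ z, downUpEnergy (𝓑.memberSubfamily z) (fun T => f (insert z T)) = n * downUpEnergy 𝓑 f := by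
  have hshadow : (∂ 𝓑 : Set (Finset E)).Sized n := hn.shadow
  rw [downUpEnergy, ← sum_sum_memberSubfamily hshadow]
  refine sum_congr rfl fun z _ => ?_
  rw [downUpEnergy, shadow_memberSubfamily]
  refine sum_congr rfl fun T hT => ?_
  rw [extensions_memberSubfamily (mem_memberSubfamily.1 hT).2]
  simp only [insert_comm z]

theorem sqDev_eq_downUpEnergy_of_sized_one (hn : (𝓑 : Set (Finset E)).Sized 1)
    (f : Finset E → ℝ) : sqDev 𝓑 f = downUpEnergy 𝓑 f := by
  obtain rfl | ⟨B, hB⟩ := 𝓑.eq_empty_or_nonempty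
  · simp [sqDev, downUpEnergy]
  have hshadow : ∂ 𝓑 = {∅} := by
    have hzero : (∂ 𝓑 : Set (Finset E)).Sized 0 := hn.shadow
    obtain ⟨b, rfl⟩ := card_eq_one.1 (hn hB)
    refine eq_singleton_iff_unique_mem.2 ⟨?_, fun T hT => card_eq_zero.1 (hzero hT)⟩
    simpa using erase_mem_shadow hB (mem_singleton_self b)
  have himage : 𝓑 = (extensions 𝓑 ∅).image fun e => insert e ∅ := by
    ext C
    simp only [mem_image, mem_extensions]
    constructor
    · intro hC
      obtain ⟨c, rfl⟩ := card_eq_one.1 (hn hC)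
      exact ⟨c, ⟨notMem_empty c, hC⟩, rfl⟩
    · rintro ⟨e, he, rfl⟩
      exact he.2
  have hinj : Set.InjOn (fun e : E => insert e (∅ : Finset E)) (extensions 𝓑 ∅) :=
    fun a _ b _ hab => singleton_injective hab
  rw [downUpEnergy, hshadow, sum_singleton]
  conv_lhs => rw [himage]
  simp only [sqDev, sum_image hinj, card_image_of_injOn hinj]

/-- The random walk theorem: the local gaps bound the gap of the down-up walk. -/
theorem IsLocalExpander.sqDev_le_downUpEnergy (hexp : IsLocalExpander (n + 1) 𝓑)
    (hn : (𝓑 : Set (Finset E)).Sized (n + 1)) (f : Finset E → ℝ) :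
    sqDev 𝓑 f ≤ downUpEnergy 𝓑 f := by
  induction n generalizing 𝓑 f with
  | zero => exact (sqDev_eq_downUpEnergy_of_sized_one hn f).le
  | succ n ih =>
    refine le_of_mul_le_mul_left ?_ (Nat.cast_add_one_pos (α := ℝ) n)
    rw [← Nat.cast_add_one]
    calc ((n + 1 : ℕ) : ℝ) * sqDev 𝓑 f
        ≤ ∑ z, sqDev (𝓑.memberSubfamily z) fun T => f (insert z T) := hexp.1.mul_sqDev_le hn f
      _ ≤ ∑ z, downUpEnergy (𝓑.memberSubfamily z) fun T => f (insert z T) :=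
          sum_le_sum fun z _ => ih (hexp.2 z) (sized_memberSubfamily hn z) _
      _ = (n + 1 : ℕ) * downUpEnergy 𝓑 f := sum_downUpEnergy_memberSubfamily hn f

end RandomWalkTheorem

section UniformWalk

/-- The uniform probability weight on `s`. -/
noncomputable def uniformWeight {ι : Type*} [DecidableEq ι] (s : Finset ι) (a : ι) : ℝ :=
  if a ∈ s then (#s : ℝ)⁻¹ else 0

variable {ι : Type*} [Fintype ι] {s : Finset ι} {P : Matrix ι ι ℝ} {γ : ℝ}

/-- `P` is a symmetric stochastic matrix on `s`, extended by zero to `ι`; the corresponding Markov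
chain on `s` is reversible with respect to the uniform distribution. -/
structure IsSymmStochasticOn (P : Matrix ι ι ℝ) (s : Finset ι) : Prop where
  isSymm : P.IsSymm
  apply_eq_zero : ∀ a ∉ s, ∀ b, P a b = 0
  mulVec_one : ∀ a ∈ s, (P *ᵥ 1) a = 1

theorem IsSymmStochasticOn.mulVec_apply_eq_zero (hP : IsSymmStochasticOn P s) (f : ι → ℝ) {a : ι}
    (ha : a ∉ s) : (P *ᵥ f) a = 0 := by
  simp [mulVec, dotProduct, hP.apply_eq_zero a ha]

theorem IsSymmStochasticOn.sum_mulVec (hP : IsSymmStochasticOn P s) {u : ι → ℝ}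
    (hu : ∀ a ∉ s, u a = 0) : ∑ a, (P *ᵥ u) a = ∑ a, u a := by
  rw [← one_dotProduct, dotProduct_mulVec, ← mulVec_transpose, hP.isSymm.eq, dotProduct]
  refine sum_congr rfl fun a _ => ?_
  by_cases ha : a ∈ s
  · rw [hP.mulVec_one a ha, one_mul]
  · rw [hu a ha, mul_zero]

variable [DecidableEq ι]

theorem sum_uniformWeight_mul (s : Finset ι) (f : ι → ℝ) :
    ∑ a, uniformWeight s a * f a = (∑ a ∈ s, f a) / #s := by
  simp [uniformWeight, ite_mul, ← mul_sum, div_eq_inv_mul]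

theorem varw_uniformWeight (s : Finset ι) (f : ι → ℝ) :
    varw (uniformWeight s) f = sqDev s f / #s := by
  simp only [varw, sum_uniformWeight_mul, sqDev]

/-- The Poincaré inequality: `P` has spectral gap at least `γ` with respect to the uniform
distribution on `s`. -/
def HasSpectralGapOn (P : Matrix ι ι ℝ) (s : Finset ι) (γ : ℝ) : Prop :=
  ∀ f : ι → ℝ, γ * sqDev s f ≤ f ⬝ᵥ weightedLaplacian P *ᵥ f

namespace IsSymmStochasticOn

theorem dotProduct_weightedLaplacian_mulVec (hP : IsSymmStochasticOn P s) (f : ι → ℝ) :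
    f ⬝ᵥ weightedLaplacian P *ᵥ f = ∑ a ∈ s, f a ^ 2 - f ⬝ᵥ P *ᵥ f := by
  rw [weightedLaplacian_mulVec, dotProduct_sub]
  congr 1
  rw [dotProduct, ← sum_subset s.subset_univ fun a _ ha => by
    rw [Pi.mul_apply, hP.mulVec_apply_eq_zero 1 ha, zero_mul, mul_zero]]
  refine sum_congr rfl fun a ha => ?_
  rw [Pi.mul_apply, hP.mulVec_one a ha, one_mul, sq]

theorem dirichletForm_uniformWeight (hP : IsSymmStochasticOn P s) (f : ι → ℝ) :
    dirichletForm (uniformWeight s) P f = (f ⬝ᵥ weightedLaplacian P *ᵥ f) / #s := by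
  have hterm : ∀ a b, uniformWeight s a * P a b = P a b / #s := by
    intro a b
    by_cases ha : a ∈ s
    · rw [uniformWeight, if_pos ha, inv_mul_eq_div]
    · rw [hP.apply_eq_zero a ha, mul_zero, zero_div]
  rw [_root_.dotProduct_weightedLaplacian_mulVec hP.isSymm, dirichletForm, mul_div_assoc]
  simp only [hterm, div_mul_eq_mul_div, sum_div]

theorem mulVec_uniformWeight (hP : IsSymmStochasticOn P s) :
    P *ᵥ uniformWeight s = uniformWeight s := by
  have hterm : ∀ a b, P a b * uniformWeight s b = P a b * (#s : ℝ)⁻¹ := by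
    intro a b
    by_cases hb : b ∈ s
    · rw [uniformWeight, if_pos hb]
    · rw [← hP.isSymm.apply, hP.apply_eq_zero b hb, zero_mul, zero_mul]
  ext a
  have hsum : (P *ᵥ uniformWeight s) a = (P *ᵥ 1) a * (#s : ℝ)⁻¹ := by
    simp only [mulVec, dotProduct, hterm, Pi.one_apply, mul_one, sum_mul]
  by_cases ha : a ∈ s
  · rw [hsum, hP.mulVec_one a ha, uniformWeight, if_pos ha, one_mul]
  · rw [hP.mulVec_apply_eq_zero _ ha, uniformWeight, if_neg ha]

end IsSymmStochasticOn

theorem HasSpectralGapOn.mul_varw_le_dirichletForm (hgap : HasSpectralGapOn P s γ)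
    (hP : IsSymmStochasticOn P s) (f : ι → ℝ) :
    γ * varw (uniformWeight s) f ≤ dirichletForm (uniformWeight s) P f := by
  rw [varw_uniformWeight, hP.dirichletForm_uniformWeight, ← mul_div_assoc]
  gcongr
  exact hgap f

theorem HasSpectralGapOn.dotProduct_mulVec_le (hgap : HasSpectralGapOn P s γ)
    (hP : IsSymmStochasticOn P s) {u : ι → ℝ} (hu : ∀ a ∉ s, u a = 0) (hsum : ∑ a, u a = 0) :
    u ⬝ᵥ P *ᵥ u ≤ (1 - γ) * (u ⬝ᵥ u) := by
  have hnorm : u ⬝ᵥ u = ∑ a ∈ s, u a ^ 2 := by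
    simp only [dotProduct, ← sq]
    exact (sum_subset s.subset_univ fun a _ ha => by rw [hu a ha, zero_pow two_ne_zero]).symm
  have hsum_s : ∑ a ∈ s, u a = 0 := by
    rwa [sum_subset s.subset_univ fun a _ ha => hu a ha]
  have hpoincare := hgap u
  rw [hP.dotProduct_weightedLaplacian_mulVec, sqDev_eq_sum_sq_sub, hsum_s, ← hnorm,
    zero_pow two_ne_zero, zero_div, sub_zero] at hpoincare
  linarith

/-- Positivity of the form of `P` at `(1 - γ) u - P u` rules out large negative eigenvalues and
turns the one-sided gap into a contraction. -/
theorem HasSpectralGapOn.dotProduct_self_mulVec_le (hgap : HasSpectralGapOn P s γ)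
    (hP : IsSymmStochasticOn P s) (hpsd : P.PosSemidef) (hγ : γ ≤ 1) {u : ι → ℝ}
    (hu : ∀ a ∉ s, u a = 0) (hsum : ∑ a, u a = 0) :
    (P *ᵥ u) ⬝ᵥ (P *ᵥ u) ≤ (1 - γ) ^ 2 * (u ⬝ᵥ u) := by
  set v := P *ᵥ u with hv
  have hu_le := hgap.dotProduct_mulVec_le hP hu hsum
  have hv_le := hgap.dotProduct_mulVec_le hP (u := v) (fun a => hP.mulVec_apply_eq_zero u)
    (by rw [hv, hP.sum_mulVec hu, hsum])
  have hsymm : u ⬝ᵥ P *ᵥ v = v ⬝ᵥ v := by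
    rw [dotProduct_mulVec, ← mulVec_transpose, hP.isSymm.eq]
  have hform : ∀ x y : ℝ, 0 ≤ x ^ 2 * (u ⬝ᵥ v) - 2 * x * y * (v ⬝ᵥ v) + y ^ 2 * (v ⬝ᵥ P *ᵥ v) := by
    intro x y
    have hnonneg := hpsd.dotProduct_mulVec_nonneg (x • u - y • v)
    simp only [star_trivial, mulVec_sub, mulVec_smul, ← hv, dotProduct_sub, sub_dotProduct,
      dotProduct_smul, smul_dotProduct, smul_eq_mul, hsymm] at hnonneg
    linarith
  obtain hγ | hγ := hγ.eq_or_lt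
  · have hform_one := hform 1 1
    rw [hγ] at hu_le hv_le ⊢
    linarith
  · have hform_gap := hform (1 - γ) 1
    have hpos : 0 < 1 - γ := by linarith
    refine le_of_mul_le_mul_left ?_ hpos
    have hu_scaled := mul_le_mul_of_nonneg_left hu_le (sq_nonneg (1 - γ))
    linarith

theorem IsSymmStochasticOn.pow_succ_sub_uniformWeight (hP : IsSymmStochasticOn P s) (a : ι)
    (t : ℕ) : (P ^ (t + 1)) a - uniformWeight s = P *ᵥ ((P ^ t) a - uniformWeight s) := by
  rw [mulVec_sub, hP.mulVec_uniformWeight, pow_succ, mul_apply_eq_vecMul, ← mulVec_transpose,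
    hP.isSymm.eq]

theorem HasSpectralGapOn.pow_sub_uniformWeight (hgap : HasSpectralGapOn P s γ)
    (hP : IsSymmStochasticOn P s) (hpsd : P.PosSemidef) (hγ : γ ≤ 1) {a : ι} (ha : a ∈ s) (t : ℕ) :
    (∀ b ∉ s, ((P ^ t) a - uniformWeight s) b = 0) ∧
      ∑ b, ((P ^ t) a - uniformWeight s) b = 0 ∧
      ((P ^ t) a - uniformWeight s) ⬝ᵥ ((P ^ t) a - uniformWeight s) ≤ (1 - γ) ^ (2 * t) := by
  induction t with
  | zero =>
    have hcard : (#s : ℝ) ≠ 0 := by simpa using ne_empty_of_mem ha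
    have hstart : (P ^ 0) a = Pi.single a 1 := by
      ext b
      simp only [pow_zero, one_apply, Pi.single_apply, eq_comm]
    have hself : uniformWeight s ⬝ᵥ uniformWeight s = (#s : ℝ)⁻¹ := by
      rw [dotProduct, sum_uniformWeight_mul]
      simp [uniformWeight, hcard]
    rw [hstart]
    refine ⟨fun b hb => ?_, ?_, ?_⟩
    · simp [uniformWeight, hb, (ne_of_mem_of_not_mem ha hb).symm]
    · simp [uniformWeight, hcard]
    · simp [dotProduct_sub, sub_dotProduct, hself, uniformWeight, ha]
  | succ t ih =>
    obtain ⟨hsupp, hsum, hnorm⟩ := ih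
    rw [hP.pow_succ_sub_uniformWeight]
    refine ⟨fun b => hP.mulVec_apply_eq_zero _, (hP.sum_mulVec hsupp).trans hsum, ?_⟩
    calc _ ≤ (1 - γ) ^ 2 * (((P ^ t) a - uniformWeight s) ⬝ᵥ ((P ^ t) a - uniformWeight s)) :=
          hgap.dotProduct_self_mulVec_le hP hpsd hγ hsupp hsum
      _ ≤ (1 - γ) ^ 2 * (1 - γ) ^ (2 * t) := by gcongr
      _ = (1 - γ) ^ (2 * (t + 1)) := by ring

theorem HasSpectralGapOn.sum_abs_pow_sub_le (hgap : HasSpectralGapOn P s γ)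
    (hP : IsSymmStochasticOn P s) (hpsd : P.PosSemidef) (hγ : γ ≤ 1) {a : ι} (ha : a ∈ s) (t : ℕ) :
    ∑ b, |(P ^ t) a b - uniformWeight s b| ≤ √(#s) * (1 - γ) ^ t := by
  obtain ⟨hsupp, -, hnorm⟩ := hgap.pow_sub_uniformWeight hP hpsd hγ ha t
  set u := (P ^ t) a - uniformWeight s
  have hsum : ∑ b, |u b| = ∑ b ∈ s, |u b| :=
    (sum_subset s.subset_univ fun b _ hb => by rw [hsupp b hb, abs_zero]).symm
  have hnonneg : 0 ≤ 1 - γ := by linarith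
  refine le_of_sq_le_sq ?_ (by positivity)
  calc (∑ b, |u b|) ^ 2 = (∑ b ∈ s, |u b|) ^ 2 := by rw [hsum]
    _ ≤ #s * ∑ b ∈ s, |u b| ^ 2 := sq_sum_le_card_mul_sum_sq
    _ ≤ #s * (u ⬝ᵥ u) := by
      simp only [dotProduct, ← sq, sq_abs]
      gcongr
      exact s.subset_univ
    _ ≤ #s * (1 - γ) ^ (2 * t) := by gcongr
    _ = (√(#s) * (1 - γ) ^ t) ^ 2 := by
      rw [mul_pow, Real.sq_sqrt (Nat.cast_nonneg _), ← pow_mul, mul_comm t]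

theorem HasSpectralGapOn.totalVariation_le (hgap : HasSpectralGapOn P s γ)
    (hP : IsSymmStochasticOn P s) (hpsd : P.PosSemidef) (hγ : γ ≤ 1) {a : ι} (ha : a ∈ s)
    {ε : ℝ} (hε : 0 < ε) {t : ℕ} (ht : Real.log (#s / ε) ≤ γ * t) :
    (1 / 2) * ∑ b, |(P ^ t) a b - uniformWeight s b| ≤ ε := by
  have hcard : (1 : ℝ) ≤ #s := mod_cast card_pos.2 ⟨a, ha⟩
  have hdecay : #s * Real.exp (-(γ * t)) ≤ ε := by
    rw [Real.log_le_iff_le_exp (by positivity), div_le_iff₀ hε] at ht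
    rw [Real.exp_neg, ← div_eq_mul_inv, div_le_iff₀ (Real.exp_pos _)]
    linarith
  have hsum := calc
    ∑ b, |(P ^ t) a b - uniformWeight s b| ≤ √(#s) * (1 - γ) ^ t :=
      hgap.sum_abs_pow_sub_le hP hpsd hγ ha t
    _ ≤ #s * Real.exp (-γ) ^ t := by
      have hnonneg : 0 ≤ 1 - γ := sub_nonneg.2 hγ
      have hsqrt : √(#s) ≤ #s :=
        Real.sqrt_le_iff.2 ⟨by positivity, le_self_pow₀ hcard two_ne_zero⟩
      exact mul_le_mul hsqrt (pow_le_pow_left₀ hnonneg (Real.one_sub_le_exp_neg γ) t)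
        (pow_nonneg hnonneg t) (Nat.cast_nonneg _)
    _ = #s * Real.exp (-(γ * t)) := by rw [← Real.exp_nat_mul]; ring_nf
  linarith

end UniformWalk

section DownUpWalk

variable {E : Type*} [Fintype E] [DecidableEq E] {𝓑 : Finset (Finset E)} {r : ℕ}

/-- The down-up walk on a family `𝓑` of `r`-sets: remove a uniformly random vertex, then add a
uniformly random vertex among those leading back to `𝓑`. Rows off `𝓑` are zero. -/
noncomputable def downUpWalk (𝓑 : Finset (Finset E)) (r : ℕ) : Matrix (Finset E) (Finset E) ℝ :=
  of fun B B' => if B ∈ 𝓑 then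
    (r : ℝ)⁻¹ * ∑ e ∈ B, ∑ f ∈ extensions 𝓑 (B.erase e),
      if B' = insert f (B.erase e) then (#(extensions 𝓑 (B.erase e)) : ℝ)⁻¹ else 0
  else 0

/-- The mean of `f` over the members of `𝓑` obtained from `T` by adding a vertex. -/
noncomputable def extensionMean (𝓑 : Finset (Finset E)) (f : Finset E → ℝ) (T : Finset E) : ℝ :=
  (∑ e ∈ extensions 𝓑 T, f (insert e T)) / #(extensions 𝓑 T)

theorem card_mul_extensionMean (𝓑 : Finset (Finset E)) (f : Finset E → ℝ) (T : Finset E) :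
    #(extensions 𝓑 T) * extensionMean 𝓑 f T = ∑ e ∈ extensions 𝓑 T, f (insert e T) := by
  obtain hT | hT := (extensions 𝓑 T).eq_empty_or_nonempty
  · simp [hT]
  · exact mul_div_cancel₀ _ (by simpa using hT.ne_empty)

theorem mem_extensions_erase {B : Finset E} (hB : B ∈ 𝓑) {e : E} (he : e ∈ B) :
    e ∈ extensions 𝓑 (B.erase e) :=
  mem_extensions.2 ⟨notMem_erase e B, by rwa [insert_erase he]⟩

theorem sum_shadow_extensions {M : Type*} [AddCommMonoid M] (𝓑 : Finset (Finset E))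
    (F : E → Finset E → M) :
    ∑ T ∈ ∂ 𝓑, ∑ e ∈ extensions 𝓑 T, F e T = ∑ B ∈ 𝓑, ∑ e ∈ B, F e (B.erase e) := by
  rw [sum_sigma', sum_sigma']
  refine sum_bij' (fun p _ => ⟨insert p.2 p.1, p.2⟩)
    (fun p _ => ⟨p.1.erase p.2, p.2⟩) ?_ ?_ ?_ ?_ ?_ <;>
    simp +contextual [mem_extensions, insert_erase, erase_mem_shadow]

theorem sum_shadow_sum_extensions (hr : (𝓑 : Set (Finset E)).Sized r) (f : Finset E → ℝ) :
    ∑ T ∈ ∂ 𝓑, ∑ e ∈ extensions 𝓑 T, f (insert e T) = r * ∑ B ∈ 𝓑, f B := by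
  rw [sum_shadow_extensions 𝓑 fun e T => f (insert e T), mul_sum]
  refine sum_congr rfl fun B hB => ?_
  rw [sum_congr rfl fun e he => by rw [insert_erase he], sum_const, hr hB, nsmul_eq_mul]

theorem downUpWalk_mulVec (f : Finset E → ℝ) {B : Finset E} (hB : B ∈ 𝓑) :
    (downUpWalk 𝓑 r *ᵥ f) B = (r : ℝ)⁻¹ * ∑ e ∈ B, extensionMean 𝓑 f (B.erase e) := by
  simp only [mulVec, dotProduct, downUpWalk, of_apply, if_pos hB, mul_assoc, ← mul_sum, sum_mul]
  rw [sum_comm]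
  congr 1
  refine sum_congr rfl fun e _ => ?_
  rw [sum_comm]
  simp only [ite_mul, zero_mul, sum_ite_eq', mem_univ, if_true, extensionMean, sum_div,
    inv_mul_eq_div]

theorem downUpWalk_apply_eq_zero {B : Finset E} (hB : B ∉ 𝓑) (B' : Finset E) :
    downUpWalk 𝓑 r B B' = 0 := by
  simp only [downUpWalk, of_apply, if_neg hB]

theorem dotProduct_downUpWalk_mulVec (f g : Finset E → ℝ) :
    f ⬝ᵥ downUpWalk 𝓑 r *ᵥ g = (r : ℝ)⁻¹ *
      ∑ T ∈ ∂ 𝓑, #(extensions 𝓑 T) * (extensionMean 𝓑 f T * extensionMean 𝓑 g T) := by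
  have hzero : ∀ B ∉ 𝓑, f B * (downUpWalk 𝓑 r *ᵥ g) B = 0 := by
    intro B hB
    simp [mulVec, dotProduct, downUpWalk_apply_eq_zero hB]
  simp only [← mul_assoc, card_mul_extensionMean, sum_mul]
  rw [sum_shadow_extensions 𝓑 fun e T => f (insert e T) * extensionMean 𝓑 g T, dotProduct,
    ← sum_subset 𝓑.subset_univ fun B _ hB => hzero B hB, mul_sum]
  refine sum_congr rfl fun B hB => ?_
  rw [downUpWalk_mulVec g hB, mul_left_comm, mul_sum]
  congr 1
  exact sum_congr rfl fun e he => by rw [insert_erase he]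

theorem downUpWalk_isSymm (𝓑 : Finset (Finset E)) (r : ℕ) : (downUpWalk 𝓑 r).IsSymm := by
  ext B B'
  have hswap := dotProduct_downUpWalk_mulVec (𝓑 := 𝓑) (r := r) (Pi.single B' 1) (Pi.single B 1)
  simp only [mul_comm (extensionMean 𝓑 (Pi.single B' 1) _), ← dotProduct_downUpWalk_mulVec] at hswap
  simpa using hswap

theorem downUpWalk_posSemidef (𝓑 : Finset (Finset E)) (r : ℕ) : (downUpWalk 𝓑 r).PosSemidef := by
  refine posSemidef_iff_dotProduct_mulVec.2 ⟨?_, fun f => ?_⟩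
  · rw [IsHermitian, conjTranspose_eq_transpose_of_trivial, downUpWalk_isSymm]
  · rw [star_trivial, dotProduct_downUpWalk_mulVec]
    exact mul_nonneg (by positivity) <| sum_nonneg fun T _ =>
      mul_nonneg (Nat.cast_nonneg _) (mul_self_nonneg _)

theorem downUpWalk_isSymmStochasticOn (hr : (𝓑 : Set (Finset E)).Sized r) (hr₀ : r ≠ 0) :
    IsSymmStochasticOn (downUpWalk 𝓑 r) 𝓑 where
  isSymm := downUpWalk_isSymm 𝓑 r
  apply_eq_zero _ hB B' := downUpWalk_apply_eq_zero hB B'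
  mulVec_one B hB := by
    have hmean : ∀ e ∈ B, extensionMean 𝓑 1 (B.erase e) = 1 := by
      intro e he
      have hne : (#(extensions 𝓑 (B.erase e)) : ℝ) ≠ 0 := by
        simpa using ne_empty_of_mem (mem_extensions_erase hB he)
      simp [extensionMean, hne]
    rw [downUpWalk_mulVec _ hB, sum_congr rfl hmean]
    simp [hr hB, hr₀]

theorem downUpEnergy_eq (hr : (𝓑 : Set (Finset E)).Sized r) (hr₀ : r ≠ 0) (f : Finset E → ℝ) :
    downUpEnergy 𝓑 f = r * (f ⬝ᵥ weightedLaplacian (downUpWalk 𝓑 r) *ᵥ f) := by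
  have hr' : (r : ℝ) ≠ 0 := Nat.cast_ne_zero.2 hr₀
  rw [(downUpWalk_isSymmStochasticOn hr hr₀).dotProduct_weightedLaplacian_mulVec,
    dotProduct_downUpWalk_mulVec, mul_sub, mul_inv_cancel_left₀ hr',
    ← sum_shadow_sum_extensions hr fun B => f B ^ 2, ← sum_sub_distrib]
  refine sum_congr rfl fun T _ => ?_
  rw [sqDev_eq_sum_sq_sub, ← mul_assoc, card_mul_extensionMean, extensionMean]
  ring

theorem IsLocalExpander.hasSpectralGapOn_downUpWalk (hexp : IsLocalExpander r 𝓑)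
    (hr : (𝓑 : Set (Finset E)).Sized r) (hr₀ : r ≠ 0) :
    HasSpectralGapOn (downUpWalk 𝓑 r) 𝓑 (1 / r) := by
  intro f
  obtain ⟨n, rfl⟩ := Nat.exists_eq_succ_of_ne_zero hr₀
  rw [one_div_mul_eq_div, div_le_iff₀' (by positivity), ← downUpEnergy_eq hr hr₀]
  exact hexp.sqDev_le_downUpEnergy hr f

end DownUpWalk

section Multipartite

variable {V ι : Type*} [Fintype V] [DecidableEq V] [DecidableEq ι] {I : Finset V} {κ : V → ι}

/-- The adjacency matrix of the complete multipartite graph on `I` whose parts are the fibres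
of `κ`; the vertices outside `I` are isolated. -/
def multipartiteMatrix (I : Finset V) (κ : V → ι) : Matrix V V ℝ :=
  of fun x y => if x ∈ I ∧ y ∈ I ∧ κ x ≠ κ y then 1 else 0

theorem dotProduct_multipartiteMatrix_mulVec [Fintype ι] (f g : V → ℝ) :
    f ⬝ᵥ multipartiteMatrix I κ *ᵥ g = (∑ x ∈ I, f x) * ∑ x ∈ I, g x
      - ∑ c, (∑ x ∈ I with κ x = c, f x) * ∑ x ∈ I with κ x = c, g x := by
  have hentry : ∀ x, f x * (multipartiteMatrix I κ *ᵥ g) x = if x ∈ I then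
      f x * ∑ y ∈ I, g y - f x * ∑ y ∈ I with κ y = κ x, g y else 0 := by
    intro x
    split_ifs with hx
    · rw [← mul_sub, ← sum_filter_add_sum_filter_not I (fun y => κ y = κ x) g, add_sub_cancel_left]
      congr 1
      simp only [mulVec, dotProduct, multipartiteMatrix, of_apply, hx, true_and, ite_mul, one_mul,
        zero_mul, ← sum_filter]
      refine sum_congr ?_ fun _ _ => rfl
      ext y
      simp [eq_comm]
    · simp [mulVec, dotProduct, multipartiteMatrix, hx]
  have hclass : ∑ x ∈ I, f x * ∑ y ∈ I with κ y = κ x, g y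
      = ∑ c, (∑ x ∈ I with κ x = c, f x) * ∑ x ∈ I with κ x = c, g x := by
    rw [← sum_fiberwise I κ]
    refine sum_congr rfl fun c _ => ?_
    rw [sum_mul]
    exact sum_congr rfl fun x hx => by rw [(mem_filter.1 hx).2]
  rw [dotProduct, sum_congr rfl fun x _ => hentry x, ← sum_filter, filter_mem_eq_inter,
    univ_inter, sum_sub_distrib, hclass, sum_mul]

/-- Complete multipartite graphs have at most one positive eigenvalue; equivalently the gap of
their random walk is at least `1`. -/
theorem dotProduct_multipartiteMatrix_mulVec_nonpos [Finite ι] {g : V → ℝ}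
    (hg : g ⬝ᵥ multipartiteMatrix I κ *ᵥ 1 = 0) : g ⬝ᵥ multipartiteMatrix I κ *ᵥ g ≤ 0 := by
  cases nonempty_fintype ι
  obtain rfl | hI := I.eq_empty_or_nonempty
  · simp [dotProduct_multipartiteMatrix_mulVec]
  set G : ι → ℝ := fun c => ∑ x ∈ I with κ x = c, g x with hG
  set N : ι → ℝ := fun c => ∑ x ∈ I with κ x = c, 1 with hN
  have hsum : ∑ c, N c = #I := by rw [sum_fiberwise]; simp
  have hpos : (0 : ℝ) < #I := mod_cast hI.card_pos
  have hmean : (∑ x ∈ I, g x) * #I = ∑ c, G c * N c := by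
    rw [dotProduct_multipartiteMatrix_mulVec, sub_eq_zero] at hg
    simpa [hG, hN] using hg
  have hcs : ((∑ x ∈ I, g x) * #I) ^ 2 ≤ (∑ c, G c ^ 2) * #I ^ 2 := calc
    ((∑ x ∈ I, g x) * #I) ^ 2 ≤ (∑ c, G c ^ 2) * ∑ c, N c ^ 2 := by
      rw [hmean]
      exact sum_mul_sq_le_sq_mul_sq _ _ _
    _ ≤ (∑ c, G c ^ 2) * #I ^ 2 := by
      rw [← hsum]
      gcongr
      exact sum_sq_le_sq_sum_of_nonneg fun c _ => by positivity
  rw [dotProduct_multipartiteMatrix_mulVec, sub_nonpos]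
  simp only [← sq]
  rw [mul_pow] at hcs
  exact le_of_mul_le_mul_right hcs (by positivity)

end Multipartite

section BasisExchange

variable {E : Type*} [DecidableEq E] {𝓑 : Finset (Finset E)} {n : ℕ}

/-- The exchange property of the bases of a matroid, for finite bases; cf.
`Matroid.ExchangeProperty`. -/
def HasBasisExchange (𝓑 : Finset (Finset E)) : Prop :=
  ∀ B ∈ 𝓑, ∀ B' ∈ 𝓑, ∀ a ∈ B \ B', ∃ b ∈ B' \ B, insert b (B.erase a) ∈ 𝓑

theorem HasBasisExchange.memberSubfamily (h𝓑 : HasBasisExchange 𝓑) (z : E) :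
    HasBasisExchange (𝓑.memberSubfamily z) := by
  intro S hS T hT a ha
  rw [mem_memberSubfamily] at hS hT
  obtain ⟨b, hb, hmem⟩ := h𝓑 _ hS.1 _ hT.1 a (by grind)
  refine ⟨b, by grind, mem_memberSubfamily.2 ⟨?_, by grind⟩⟩
  convert hmem using 1
  grind

theorem HasBasisExchange.reflTransGen_of_mem (h𝓑 : HasBasisExchange 𝓑)
    (hn : (𝓑 : Set (Finset E)).Sized (n + 2)) {B B' : Finset E} (hB : B ∈ 𝓑) (hB' : B' ∈ 𝓑)
    {x y : E} (hx : x ∈ B) (hy : y ∈ B') :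
    Relation.ReflTransGen (fun a b => a ≠ b ∧ ∃ C ∈ 𝓑, a ∈ C ∧ b ∈ C) x y := by
  obtain ⟨b, hb, hby, C, hC, hbC, hyC⟩ : ∃ b ∈ B, b ≠ y ∧ ∃ C ∈ 𝓑, b ∈ C ∧ y ∈ C := by
    obtain ⟨a, ha, hay⟩ := exists_mem_ne (by rw [hn hB']; lia) y
    by_cases haB : a ∈ B
    · exact ⟨a, haB, hay, B', hB', ha, hy⟩
    · obtain ⟨b, hb, hmem⟩ := h𝓑 B' hB' B hB a (mem_sdiff.2 ⟨ha, haB⟩)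
      rw [mem_sdiff] at hb
      exact ⟨b, hb.1, (ne_of_mem_of_not_mem hy hb.2).symm, _, hmem, mem_insert_self _ _,
        mem_insert_of_mem (mem_erase.2 ⟨hay.symm, hy⟩)⟩
  refine Relation.ReflTransGen.tail ?_ ⟨hby, C, hC, hbC, hyC⟩
  obtain rfl | hxb := eq_or_ne x b
  · exact .refl
  · exact .single ⟨hxb, B, hB, hx, hb⟩

/-- Non-adjacency of vertices is transitive in rank two: it is the parallelism of elements. -/
theorem HasBasisExchange.pair_mem_of_pair_notMem (h𝓑 : HasBasisExchange 𝓑)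
    (hn : (𝓑 : Set (Finset E)).Sized 2) {B : Finset E} (hB : B ∈ 𝓑) {x y z : E} (hy : y ∈ B)
    (hxz : {x, z} ∈ 𝓑) (hxy : {x, y} ∉ 𝓑) : {y, z} ∈ 𝓑 := by
  obtain ⟨w, hw⟩ := card_eq_one.1 ((card_erase_of_mem hy).trans (by rw [hn hB]))
  have hBw : B = {y, w} := by rw [← insert_erase hy, hw]
  have hyw : y ≠ w := by
    rintro rfl
    exact notMem_erase y B (hw ▸ mem_singleton_self y)
  by_cases hwxz : w ∈ ({x, z} : Finset E)
  · obtain rfl | rfl : w = x ∨ w = z := by simpa using hwxz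
    · exact absurd (pair_comm y w ▸ hBw ▸ hB) hxy
    · exact hBw ▸ hB
  · obtain ⟨b, hb, hmem⟩ := h𝓑 B hB _ hxz w (mem_sdiff.2 ⟨by simp [hBw], hwxz⟩)
    have herase : B.erase w = {y} := by
      rw [hBw, pair_comm, erase_insert (by simpa using hyw.symm)]
    rw [herase] at hmem
    obtain rfl | rfl : b = x ∨ b = z := by simpa using (mem_sdiff.1 hb).1
    · exact absurd hmem hxy
    · rwa [pair_comm]

theorem codegree_eq_ite (hn : (𝓑 : Set (Finset E)).Sized 2) (x y : E) :
    codegree 𝓑 x y = if {x, y} ∈ 𝓑 then 1 else 0 := by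
  have hmem : ∀ T, T ∈ (𝓑.memberSubfamily x).memberSubfamily y ↔ T = ∅ ∧ {x, y} ∈ 𝓑 := by
    intro T
    constructor
    · intro hT
      obtain rfl : T = ∅ :=
        card_eq_zero.1 (sized_memberSubfamily (sized_memberSubfamily hn x) y hT)
      exact ⟨rfl, (mem_memberSubfamily.1 (mem_memberSubfamily.1 hT).1).1⟩
    · rintro ⟨rfl, hxy⟩
      have hne : x ≠ y := by
        rintro rfl
        simpa using hn hxy
      simpa [mem_memberSubfamily, hne] using hxy
  rw [codegree, of_apply]
  split_ifs with hxy
  · rw [show (𝓑.memberSubfamily x).memberSubfamily y = {∅} by ext; simp [hmem, hxy]]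
    simp
  · rw [show (𝓑.memberSubfamily x).memberSubfamily y = ∅ by ext; simp [hmem, hxy]]
    simp

theorem HasBasisExchange.codegree_eq_multipartiteMatrix [Fintype E] (h𝓑 : HasBasisExchange 𝓑)
    (hn : (𝓑 : Set (Finset E)).Sized 2) :
    codegree 𝓑 = multipartiteMatrix (𝓑.biUnion id) fun x => ({y | {x, y} ∈ 𝓑} : Finset E) := by
  ext x y
  rw [codegree_eq_ite hn, multipartiteMatrix, of_apply]
  refine if_congr ⟨fun hxy => ?_, fun ⟨hx, hy, hne⟩ => ?_⟩ rfl rfl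
  · refine ⟨mem_biUnion.2 ⟨_, hxy, by simp⟩, mem_biUnion.2 ⟨_, hxy, by simp⟩, fun heq => ?_⟩
    have hloop : y ∈ ({z | {y, z} ∈ 𝓑} : Finset E) := heq ▸ mem_filter.2 ⟨mem_univ y, hxy⟩
    simpa using hn (mem_filter.1 hloop).2
  · obtain ⟨B, hB, hxB⟩ := mem_biUnion.1 hx
    obtain ⟨B', hB', hyB'⟩ := mem_biUnion.1 hy
    by_contra hxy
    refine hne (filter_congr fun z _ => ⟨fun hz => ?_, fun hz => ?_⟩)
    · exact h𝓑.pair_mem_of_pair_notMem hn hB' hyB' hz hxy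
    · exact h𝓑.pair_mem_of_pair_notMem hn hB hxB hz (pair_comm x y ▸ hxy)

theorem HasBasisExchange.hasLocalGap [Finite E] (h𝓑 : HasBasisExchange 𝓑)
    (hn : (𝓑 : Set (Finset E)).Sized n) : HasLocalGap 𝓑 := by
  cases nonempty_fintype E
  induction n using Nat.strong_induction_on generalizing 𝓑 with
  | _ n ih =>
    match n with
    | 0 | 1 => exact hasLocalGap_of_card_le_one fun B hB => by simp [hn hB]
    | 2 =>
      intro g hg
      have hmul : g ⬝ᵥ codegree 𝓑 *ᵥ 1 = vertexSum 𝓑 g := by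
        rw [vertexSum_eq_sum_card_memberSubfamily]
        exact sum_congr rfl fun x _ => by rw [codegree_mulVec_one hn]; ring
      rw [← dotProduct_codegree_mulVec]
      rw [← hmul] at hg
      rw [h𝓑.codegree_eq_multipartiteMatrix hn] at hg ⊢
      exact dotProduct_multipartiteMatrix_mulVec_nonpos hg
    | n + 3 =>
      exact hasLocalGap_of_memberSubfamily hn
        (fun z => ih (n + 2) (by lia) (h𝓑.memberSubfamily z) (sized_memberSubfamily hn z))
        fun B hB B' hB' x hx y hy => h𝓑.reflTransGen_of_mem hn hB hB' hx hy

theorem HasBasisExchange.isLocalExpander [Finite E] (h𝓑 : HasBasisExchange 𝓑)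
    (hn : (𝓑 : Set (Finset E)).Sized n) : IsLocalExpander n 𝓑 := by
  induction n generalizing 𝓑 with
  | zero => trivial
  | succ n ih =>
    exact ⟨h𝓑.hasLocalGap hn, fun z => ih (h𝓑.memberSubfamily z) (sized_memberSubfamily hn z)⟩

end BasisExchange

section MatroidBases

variable {E : Type*} [Fintype E] {Ind : Finset E → Prop} {r : ℕ}

/-- The bases of a matroid of rank `r` on a finite set, given by its independent sets. -/
noncomputable def matroidBases (Ind : Finset E → Prop) (r : ℕ) : Finset (Finset E) :=
  {B | Ind B ∧ #B = r}

theorem mem_matroidBases {B : Finset E} : B ∈ matroidBases Ind r ↔ Ind B ∧ #B = r :=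
  mem_filter_univ B

theorem sized_matroidBases (Ind : Finset E → Prop) (r : ℕ) :
    (matroidBases Ind r : Set (Finset E)).Sized r :=
  fun _ hB => (mem_matroidBases.1 hB).2

variable [DecidableEq E]

theorem hasBasisExchange_matroidBases
    (hdown : ∀ S T : Finset E, T ⊆ S → Ind S → Ind T)
    (hexch : ∀ S T : Finset E, Ind S → Ind T → #S < #T → ∃ e ∈ T \ S, Ind (insert e S)) :
    HasBasisExchange (matroidBases Ind r) := by
  intro B hB B' hB' a ha
  simp only [mem_matroidBases, mem_sdiff] at hB hB' ha ⊢
  have hcard := card_erase_add_one ha.1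
  obtain ⟨b, hb, hind⟩ := hexch (B.erase a) B' (hdown _ _ (erase_subset a B) hB.1) hB'.1 (by lia)
  rw [mem_sdiff, mem_erase, not_and] at hb
  have hbB : b ∉ B := hb.2 (ne_of_mem_of_not_mem hb.1 ha.2)
  refine ⟨b, ⟨hb.1, hbB⟩, hind, ?_⟩
  rw [card_insert_of_notMem (fun h => hbB (mem_of_mem_erase h)), hcard, hB.2]

theorem extensions_matroidBases_erase (Ind : Finset E → Prop) {B : Finset E} {e : E} (he : e ∈ B) :
    extensions (matroidBases Ind #B) (B.erase e)
      = univ.filter fun f => f ∉ B.erase e ∧ Ind (insert f (B.erase e)) := by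
  ext f
  rw [mem_extensions, mem_filter_univ, mem_matroidBases]
  refine and_congr_right fun hf => and_iff_left ?_
  rw [card_insert_of_notMem hf, card_erase_add_one he]

theorem downUpWalk_matroidBases_apply (Ind : Finset E → Prop) (r : ℕ) (B B' : Finset E) :
    downUpWalk (matroidBases Ind r) r B B' = if Ind B ∧ #B = r then
        (r : ℝ)⁻¹ * ∑ e ∈ B,
          ∑ f ∈ univ.filter (fun f => f ∉ B.erase e ∧ Ind (insert f (B.erase e))),
            (if B' = insert f (B.erase e) then
              ((univ.filter (fun g => g ∉ B.erase e ∧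
                Ind (insert g (B.erase e)))).card : ℝ)⁻¹ else 0)
      else 0 := by
  rw [downUpWalk, of_apply]
  refine if_ctx_congr mem_matroidBases (fun hB => ?_) fun _ => rfl
  obtain ⟨-, rfl⟩ := hB
  congr 1
  exact sum_congr rfl fun e he => by rw [extensions_matroidBases_erase Ind he]

end MatroidBases

theorem bases_exchange_walk_gap_and_mixing_general {E : Type*} [Fintype E] [DecidableEq E]
    {𝓑 : Finset (Finset E)} {r : ℕ} (hr : r ≠ 0) (h𝓑 : (𝓑 : Set (Finset E)).Sized r)
    (hexp : IsLocalExpander r 𝓑) :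
    (∀ f : Finset E → ℝ, (1 / (r : ℝ)) * varw (uniformWeight 𝓑) f
      ≤ dirichletForm (uniformWeight 𝓑) (downUpWalk 𝓑 r) f)
    ∧ ∀ B₀ ∈ 𝓑, ∀ ε : ℝ, 0 < ε → ∀ t : ℕ, (r : ℝ) * Real.log (#𝓑 / ε) ≤ t →
        (1 / 2) * ∑ B, |(downUpWalk 𝓑 r ^ t) B₀ B - uniformWeight 𝓑 B| ≤ ε := by
  have hwalk := downUpWalk_isSymmStochasticOn h𝓑 hr
  have hgap := hexp.hasSpectralGapOn_downUpWalk h𝓑 hr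
  refine ⟨hgap.mul_varw_le_dirichletForm hwalk, fun B₀ hB₀ ε hε t ht => ?_⟩
  have hr₁ : (1 : ℝ) ≤ r := mod_cast Nat.one_le_iff_ne_zero.2 hr
  refine hgap.totalVariation_le hwalk (downUpWalk_posSemidef 𝓑 r)
    (div_le_one_of_le₀ hr₁ (by positivity)) hB₀ hε ?_
  rwa [one_div_mul_eq_div, le_div_iff₀' (by positivity)]

/-- for a matroid of rank `r`, the bases-exchange walk has spectral
gap at least `1/r` (Poincaré inequality w.r.t. the uniform distribution on bases),
and hence it mixes: the total variation distance from uniform is at most `ε` after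
`t ≥ r·log(|F|/ε)` steps (with `|F| ≤ n^r` this is the `O(r²·log n)` mixing bound). -/
theorem bases_exchange_walk_gap_and_mixing (E : Type*) [Fintype E] [DecidableEq E]
    (Ind : Finset E → Prop) (r : ℕ) (hr : 0 < r)
    (hempty : Ind ∅)
    (hdown : ∀ S T : Finset E, T ⊆ S → Ind S → Ind T)
    (hexch : ∀ S T : Finset E, Ind S → Ind T → S.card < T.card →
      ∃ e ∈ T \ S, Ind (insert e S))
    (hrank : ∀ S : Finset E, Ind S → S.card ≤ r)
    (hbasis : ∃ B : Finset E, Ind B ∧ B.card = r)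
    (P : Matrix (Finset E) (Finset E) ℝ)
    (hP : ∀ B B' : Finset E, P B B' = if Ind B ∧ B.card = r then
        (r : ℝ)⁻¹ * ∑ e ∈ B,
          ∑ f ∈ univ.filter (fun f => f ∉ B.erase e ∧ Ind (insert f (B.erase e))),
            (if B' = insert f (B.erase e) then
              ((univ.filter (fun g => g ∉ B.erase e ∧
                Ind (insert g (B.erase e)))).card : ℝ)⁻¹ else 0)
      else 0)
    (πB : Finset E → ℝ)
    (hπ : ∀ B : Finset E, πB B = if Ind B ∧ B.card = r then
        ((univ.filter (fun B₀ : Finset E => Ind B₀ ∧ B₀.card = r)).card : ℝ)⁻¹ else 0) :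
    (∀ f : Finset E → ℝ, (1 / (r : ℝ)) * varw πB f ≤ dirichletForm πB P f)
    ∧ ∀ B₀ : Finset E, Ind B₀ → B₀.card = r → ∀ ε : ℝ, 0 < ε → ∀ t : ℕ,
        (r : ℝ) * Real.log
            (((univ.filter (fun B : Finset E => Ind B ∧ B.card = r)).card : ℝ) / ε)
          ≤ (t : ℝ) →
        (1 / 2) * ∑ B' : Finset E, |(P ^ t) B₀ B' - πB B'| ≤ ε := by
  have hP' : P = downUpWalk (matroidBases Ind r) r := by
    ext B B'
    rw [hP, downUpWalk_matroidBases_apply]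
  have hπ' : πB = uniformWeight (matroidBases Ind r) := by
    ext B
    exact (hπ B).trans (if_congr mem_matroidBases.symm rfl rfl)
  have hsized := sized_matroidBases Ind r
  obtain ⟨hgap, hmix⟩ := bases_exchange_walk_gap_and_mixing_general hr.ne' hsized
    ((hasBasisExchange_matroidBases hdown hexch).isLocalExpander hsized)
  rw [hP', hπ']
  exact ⟨hgap, fun B₀ hind hcard => hmix B₀ (mem_matroidBases.2 ⟨hind, hcard⟩)⟩
end
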